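/- arXiv:2103.12627 — 7 statements merged into one kernel-verified Lean document; each statement's English description precedes it below -/
import Mathlib

section
/- Fix integers k ≥ 2 and n > r ≥ 3, and k integers s_0, …, s_{k−1} all satisfying r + 1 ≤ s_i ≤ n. If n ↛ (s_0, …, s_{k−1})^r, then 2^n ↛ (s_0 + 1, …, s_{k−1} + 1, r+2, …, r+2)^{r+1}, where the value r+2 appears exactly η(r) times as an additional target size (so the new colouring uses k + η(r) colours). -/
/-!
A stepping-up argument. For numbers `a ≠ b` let `dl a b` be the highest binary digit in which they
differ. For `a < b < c` one has `dl a b ≠ dl b c` and `dl a c = max (dl a b) (dl b c)`, so an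
increasing sequence of points is governed by the sequence of its consecutive values of `dl`; a *peak*
is an interior local maximum of that sequence.

Let `f` witness `n ↛ (s_0, …, s_{k-1})^r`. An `(r+1)`-set without peaks is coloured by `f` of its
set of `dl`-values. An `(r+1)`-set with a peak is coloured by the position `p` (counted from `0`) of
its first peak: `p = 0` gives colour `k`; odd `p` gives `k + 1`; even `p > 0` gives `k + 2` if `r` is
odd, and the *old* colour `0` if `r` is even. For `r = 3` only `p = 0` occurs, so the number of
additional colours is `eta r`.

* If an `(r+2)`-set has a peak, then removing its first point and removing its last point give
  `(r+1)`-sets of different colours (`stepColor_windows_ne`): typically the removal of the first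
  point moves the first peak by one and the removal of the last point does not move it. The parity
  of `r` matters when the only peak is as far to the right as possible.
* Hence a homogeneous set has no peak at all (`peakFree_of_homogeneous`). In a set `X` without peaks the
  largest `dl`-value separates off a single extreme point, so by induction `X` has exactly `|X| - 1`
  `dl`-values, and every set `T` of them is the set of `dl`-values of some `Y ⊆ X` with
  `|Y| = |T| + 1` (`PeakFree.diffs_spec`). Thus a homogeneous set of size `s i + 1` gives an
  `f`-homogeneous set of size `s i` in `{0, …, n-1}`.
-/

/-- `η(r)`: 1 if r = 3, 2 if r > 3 is even, 3 if r > 3 is odd. -/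
def eta (r : ℕ) : ℕ := if r = 3 then 1 else if r % 2 = 0 then 2 else 3

/-- The arrow relation `n → (s_0, …, s_{k-1})^r`: every colouring of the `r`-subsets of
`{0, …, n-1}` with `k` colours admits a colour `i` and a set `X ⊆ {0, …, n-1}` with
`|X| = s i` all of whose `r`-subsets get colour `i`. -/
def ArrowsV (n r k : ℕ) (s : Fin k → ℕ) : Prop :=
  ∀ f : Finset ℕ → Fin k, ∃ i : Fin k, ∃ X ⊆ Finset.range n,
    X.card = s i ∧ ∀ Y ⊆ X, Y.card = r → f Y = i

/-! ### The highest differing digit -/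

theorem exists_div_pow_eq (a b : ℕ) : ∃ j, a / 2 ^ (j + 1) = b / 2 ^ (j + 1) := by
  refine ⟨a + b, ?_⟩
  have h : a + b + 1 < 2 ^ (a + b + 1) := Nat.lt_two_pow_self
  rw [Nat.div_eq_of_lt (by omega), Nat.div_eq_of_lt (by omega)]

/-- The highest binary digit in which `a` and `b` differ (with junk value `0` if `a = b`), encoded as
the least `j` such that `a` and `b` agree above digit `j`. -/
def dl (a b : ℕ) : ℕ := Nat.find (exists_div_pow_eq a b)

theorem dl_le_iff (a b j : ℕ) : dl a b ≤ j ↔ a / 2 ^ (j + 1) = b / 2 ^ (j + 1) := by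
  unfold dl
  rw [Nat.find_le_iff]
  constructor
  · rintro ⟨m, hm, h⟩
    obtain ⟨t, rfl⟩ := Nat.exists_eq_add_of_le hm
    have e : 2 ^ (m + t + 1) = 2 ^ (m + 1) * 2 ^ t := by rw [← pow_add]; congr 1; omega
    rw [e, ← Nat.div_div_eq_div_mul, ← Nat.div_div_eq_div_mul, h]
  · intro h
    exact ⟨j, le_rfl, h⟩

theorem dl_comm (a b : ℕ) : dl a b = dl b a :=
  le_antisymm ((dl_le_iff _ _ _).2 ((dl_le_iff _ _ _).1 le_rfl).symm)
    ((dl_le_iff _ _ _).2 ((dl_le_iff _ _ _).1 le_rfl).symm)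

theorem dl_trans {a b c : ℕ} (hab : a ≤ b) (hbc : b ≤ c) : dl a c = max (dl a b) (dl b c) := by
  apply eq_of_forall_ge_iff
  intro j
  rw [max_le_iff, dl_le_iff, dl_le_iff, dl_le_iff]
  have h1 := Nat.div_le_div_right (c := 2 ^ (j + 1)) hab
  have h2 := Nat.div_le_div_right (c := 2 ^ (j + 1)) hbc
  omega

theorem dl_mono {a b c e : ℕ} (hab : a ≤ b) (hbc : b ≤ c) (hce : c ≤ e) : dl b c ≤ dl a e := by
  rw [dl_trans hab (hbc.trans hce), dl_trans hbc hce]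
  exact le_max_of_le_right (le_max_left _ _)

theorem dl_digit_lt {a b : ℕ} (hab : a < b) : a / 2 ^ dl a b < b / 2 ^ dl a b := by
  refine lt_of_le_of_ne (Nat.div_le_div_right hab.le) fun h => ?_
  rcases hd : dl a b with _ | j
  · rw [hd] at h
    simp at h
    omega
  · rw [hd] at h
    have := (dl_le_iff a b j).2 h
    omega

/-- At the common digit, `a`, `b`, `c` would have to take three different values. -/
theorem dl_ne {a b c : ℕ} (hab : a < b) (hbc : b < c) : dl a b ≠ dl b c := by
  intro h
  have h1 := dl_digit_lt hab
  have h2 := dl_digit_lt hbc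
  have h3 := (dl_le_iff a b _).1 le_rfl
  have h4 := (dl_le_iff b c _).1 le_rfl
  rw [← h] at h2 h4
  rw [pow_succ, ← Nat.div_div_eq_div_mul, ← Nat.div_div_eq_div_mul] at h3 h4
  omega

theorem dl_lt {a b n : ℕ} (hn : 0 < n) (ha : a < 2 ^ n) (hb : b < 2 ^ n) : dl a b < n := by
  have : dl a b ≤ n - 1 := by
    rw [dl_le_iff, Nat.sub_add_cancel hn, Nat.div_eq_of_lt ha, Nat.div_eq_of_lt hb]
  omega

/-! ### Sets without peaks -/

/-- The set of all `dl`-values of pairs of distinct points of `X`. -/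
def diffs (X : Finset ℕ) : Finset ℕ := X.offDiag.image fun p => dl p.1 p.2

/-- No four points of `X` have a peak in the middle. Unlike the condition on consecutive points only,
this is visibly inherited by subsets; the two are equivalent by `peakFree_of_no_peak` and
`PeakFree.not_peak`. -/
def PeakFree (X : Finset ℕ) : Prop :=
  ∀ a ∈ X, ∀ b ∈ X, ∀ c ∈ X, ∀ e ∈ X, a < b → b < c → c < e →
    ¬ (dl a b < dl b c ∧ dl c e < dl b c)

theorem PeakFree.subset {X Y : Finset ℕ} (h : PeakFree X) (hYX : Y ⊆ X) : PeakFree Y :=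
  fun a ha b hb c hc e he => h a (hYX ha) b (hYX hb) c (hYX hc) e (hYX he)

theorem mem_diffs {X : Finset ℕ} {v : ℕ} :
    v ∈ diffs X ↔ ∃ y ∈ X, ∃ z ∈ X, y ≠ z ∧ dl y z = v := by
  simp only [diffs, Finset.mem_image, Finset.mem_offDiag, Prod.exists]
  constructor
  · rintro ⟨y, z, ⟨hy, hz, hyz⟩, h⟩
    exact ⟨y, hy, z, hz, hyz, h⟩
  · rintro ⟨y, hy, z, hz, hyz, h⟩
    exact ⟨y, z, ⟨hy, hz, hyz⟩, h⟩

/-- In a set without peaks the largest `dl`-value separates one point (the least or the greatest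
one) from all others. -/
theorem PeakFree.exists_split {X : Finset ℕ} (h : PeakFree X) (hX : 2 ≤ X.card) :
    ∃ M, ∃ x ∈ X, (∀ y ∈ X, y ≠ x → dl x y = M) ∧
      ∀ y ∈ X, ∀ z ∈ X, y ≠ x → z ≠ x → y ≠ z → dl y z < M := by
  have hne : X.Nonempty := Finset.card_pos.1 (by omega)
  set a := X.min' hne with ha
  set b := X.max' hne with hb
  have haX : a ∈ X := X.min'_mem hne
  have hbX : b ∈ X := X.max'_mem hne
  have hle : ∀ y ∈ X, a ≤ y := fun y hy => X.min'_le y hy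
  have hge : ∀ y ∈ X, y ≤ b := fun y hy => X.le_max' y hy
  -- The strict bound only needs to be checked for `y < z`.
  have wlog_lt : ∀ x, (∀ y ∈ X, ∀ z ∈ X, y ≠ x → z ≠ x → y < z → dl y z < dl a b) →
      ∀ y ∈ X, ∀ z ∈ X, y ≠ x → z ≠ x → y ≠ z → dl y z < dl a b := by
    intro x hx y hy z hz hyx hzx hyz
    rcases lt_or_gt_of_ne hyz with h1 | h1
    · exact hx y hy z hz hyx hzx h1
    · rw [dl_comm]
      exact hx z hz y hy hzx hyx h1
  by_cases hcase : ∃ y ∈ X, y ≠ a ∧ dl a y < dl a b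
  · obtain ⟨y, hy, hya, hyM⟩ := hcase
    have key : ∀ z ∈ X, z ≠ b → dl z b = dl a b := by
      intro z hz hzb
      by_contra hne'
      have h1 := dl_trans (hle z hz) (hge z hz)
      have hyz : y < z := by
        by_contra hcon
        have := dl_mono (le_refl a) (hle z hz) (not_lt.1 hcon)
        omega
      have hay : a < y := lt_of_le_of_ne (hle y hy) (Ne.symm hya)
      have h2 := dl_trans hay.le hyz.le
      refine h a haX y hy z hz b hbX hay hyz (lt_of_le_of_ne (hge z hz) hzb) ?_
      omega
    refine ⟨dl a b, b, hbX, fun z hz hzb => by rw [dl_comm, key z hz hzb], wlog_lt b ?_⟩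
    intro y hy z hz hyb hzb hyz
    have h1 := dl_ne hyz (lt_of_le_of_ne (hge z hz) hzb)
    rw [key z hz hzb] at h1
    have := dl_mono (hle y hy) hyz.le (hge z hz)
    omega
  · push Not at hcase
    have key : ∀ y ∈ X, y ≠ a → dl a y = dl a b := fun y hy hya =>
      le_antisymm (dl_mono le_rfl (hle y hy) (hge y hy)) (hcase y hy hya)
    refine ⟨dl a b, a, haX, key, wlog_lt a ?_⟩
    intro y hy z hz hya hza hyz
    have h1 := dl_ne (lt_of_le_of_ne (hle y hy) (Ne.symm hya)) hyz
    rw [key y hy hya] at h1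
    have := dl_mono (hle y hy) hyz.le (hge z hz)
    omega

theorem diffs_insert {X : Finset ℕ} {x M : ℕ} (hne : X.Nonempty) (hx : x ∉ X)
    (h : ∀ y ∈ X, dl x y = M) : diffs (insert x X) = insert M (diffs X) := by
  ext v
  simp only [Finset.mem_insert, mem_diffs]
  constructor
  · rintro ⟨y, rfl | hy, z, rfl | hz, hyz, rfl⟩
    · exact absurd rfl hyz
    · exact Or.inl (h z hz)
    · exact Or.inl (by rw [dl_comm, h y hy])
    · exact Or.inr ⟨y, hy, z, hz, hyz, rfl⟩
  · rintro (rfl | ⟨y, hy, z, hz, hyz, rfl⟩)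
    · obtain ⟨y, hy⟩ := hne
      exact ⟨x, Or.inl rfl, y, Or.inr hy, fun e => hx (e ▸ hy), h y hy⟩
    · exact ⟨y, Or.inr hy, z, Or.inr hz, hyz, rfl⟩

theorem diffs_singleton (x : ℕ) : diffs {x} = ∅ := by
  simp [diffs]

/-- In a set without peaks the consecutive `dl`-values are pairwise distinct, and every set of
`dl`-values is realised by a subset with one more element. -/
theorem PeakFree.diffs_spec (m : ℕ) : ∀ X : Finset ℕ, X.card = m + 1 → PeakFree X →
    (diffs X).card = m ∧
      ∀ T ⊆ diffs X, ∃ Y ⊆ X, Y.card = T.card + 1 ∧ diffs Y = T := by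
  induction m with
  | zero =>
    intro X hX _
    obtain ⟨x, rfl⟩ := Finset.card_eq_one.1 hX
    rw [diffs_singleton]
    refine ⟨rfl, fun T hT => ⟨{x}, Finset.Subset.refl _, ?_, ?_⟩⟩
    · rw [Finset.subset_empty.1 hT]; rfl
    · rw [Finset.subset_empty.1 hT, diffs_singleton]
  | succ m ih =>
    intro X hX hP
    obtain ⟨M, x, hx, hM, hlt⟩ := hP.exists_split (by omega)
    have hcard : (X.erase x).card = m + 1 := by rw [Finset.card_erase_of_mem hx]; omega
    obtain ⟨ihc, ihT⟩ := ih _ hcard (hP.subset (Finset.erase_subset _ _))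
    have hne : (X.erase x).Nonempty := Finset.card_pos.1 (by omega)
    have hM' : ∀ y ∈ X.erase x, dl x y = M := fun y hy =>
      hM y (Finset.mem_of_mem_erase hy) (Finset.ne_of_mem_erase hy)
    have hD : diffs X = insert M (diffs (X.erase x)) := by
      rw [← diffs_insert hne (Finset.notMem_erase _ _) hM', Finset.insert_erase hx]
    have hMn : M ∉ diffs (X.erase x) := by
      rw [mem_diffs]
      rintro ⟨y, hy, z, hz, hyz, e⟩
      rw [Finset.mem_erase] at hy hz
      exact (hlt y hy.2 z hz.2 hy.1 hz.1 hyz).ne e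
    rw [hD]
    refine ⟨by rw [Finset.card_insert_of_notMem hMn, ihc], fun T hT => ?_⟩
    by_cases hMT : M ∈ T
    · obtain ⟨Y, hYX, hYc, hYT⟩ := ihT (T.erase M) (Finset.subset_insert_iff.1 hT)
      have hxY : x ∉ Y := fun e => Finset.notMem_erase x X (hYX e)
      refine ⟨insert x Y, ?_, ?_, ?_⟩
      · exact Finset.insert_subset hx (hYX.trans (Finset.erase_subset _ _))
      · rw [Finset.card_insert_of_notMem hxY, hYc, Finset.card_erase_add_one hMT]
      · rw [diffs_insert (Finset.card_pos.1 (by omega)) hxY fun y hy => hM' y (hYX hy), hYT,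
          Finset.insert_erase hMT]
    · obtain ⟨Y, hYX, hYc, hYT⟩ := ihT T ((Finset.subset_insert_iff_of_notMem hMT).1 hT)
      exact ⟨Y, hYX.trans (Finset.erase_subset _ _), hYc, hYT⟩

theorem diffs_subset_range {X : Finset ℕ} {n : ℕ} (hn : 0 < n)
    (hX : X ⊆ Finset.range (2 ^ n)) : diffs X ⊆ Finset.range n := by
  intro v hv
  obtain ⟨y, hy, z, hz, -, rfl⟩ := mem_diffs.1 hv
  exact Finset.mem_range.2
    (dl_lt hn (Finset.mem_range.1 (hX hy)) (Finset.mem_range.1 (hX hz)))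

/-! ### Increasing enumerations and peaks -/

/-- The increasing enumeration of `Y`, with junk value `0` from index `Y.card` on. -/
def enum (Y : Finset ℕ) (i : ℕ) : ℕ :=
  if h : i < Y.card then Y.orderEmbOfFin rfl ⟨i, h⟩ else 0

/-- The sequence of consecutive `dl`-values of `x` has a local maximum at index `p + 1`; this involves
the points `x p, …, x (p + 3)`. -/
def Peak (x : ℕ → ℕ) (p : ℕ) : Prop :=
  dl (x p) (x (p + 1)) < dl (x (p + 1)) (x (p + 2)) ∧
    dl (x (p + 2)) (x (p + 3)) < dl (x (p + 1)) (x (p + 2))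

/-- `x` is strictly increasing on the indices `0, …, m - 1`. -/
def IncrOn (x : ℕ → ℕ) (m : ℕ) : Prop := ∀ i j, i < j → j < m → x i < x j

/-- The set of the first `m` values of `x`. -/
def initSeg (x : ℕ → ℕ) (m : ℕ) : Finset ℕ := (Finset.range m).image x

theorem enum_mem {Y : Finset ℕ} {i : ℕ} (h : i < Y.card) : enum Y i ∈ Y := by
  rw [enum, dif_pos h]
  exact Finset.orderEmbOfFin_mem _ _ _

theorem incrOn_enum (Y : Finset ℕ) : IncrOn (enum Y) Y.card := by
  intro i j hij hj
  rw [enum, enum, dif_pos hj, dif_pos (hij.trans hj)]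
  exact (Y.orderEmbOfFin rfl).strictMono hij

theorem exists_enum_eq {Y : Finset ℕ} {y : ℕ} (hy : y ∈ Y) : ∃ i < Y.card, enum Y i = y := by
  have : y ∈ Set.range (Y.orderEmbOfFin rfl) := by
    rw [Finset.range_orderEmbOfFin]; exact hy
  obtain ⟨⟨i, hi⟩, h⟩ := this
  exact ⟨i, hi, by rw [enum, dif_pos hi, h]⟩

theorem card_initSeg {x : ℕ → ℕ} {m : ℕ} (hx : IncrOn x m) : (initSeg x m).card = m := by
  rw [initSeg, Finset.card_image_of_injOn, Finset.card_range]
  intro i hi j hj h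
  simp only [Finset.coe_range, Set.mem_Iio] at hi hj
  by_contra hne
  rcases lt_or_gt_of_ne hne with h1 | h1
  · exact (hx i j h1 hj).ne h
  · exact (hx j i h1 hi).ne h.symm

theorem enum_initSeg {x : ℕ → ℕ} {m : ℕ} (hx : IncrOn x m) {i : ℕ} (hi : i < m) :
    enum (initSeg x m) i = x i := by
  have hc := card_initSeg hx
  have huniq : (fun j : Fin (initSeg x m).card => x j) = (initSeg x m).orderEmbOfFin rfl := by
    apply Finset.orderEmbOfFin_unique
    · intro j
      exact Finset.mem_image_of_mem _ (Finset.mem_range.2 (by have := j.2; omega))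
    · intro j l hjl
      exact hx j l hjl (by have := l.2; omega)
  rw [enum, dif_pos (by omega), ← huniq]

theorem peak_enum_initSeg {x : ℕ → ℕ} {m p : ℕ} (hx : IncrOn x m) (hp : p + 3 < m) :
    Peak (enum (initSeg x m)) p ↔ Peak x p := by
  unfold Peak
  rw [enum_initSeg hx hp, enum_initSeg hx (show p + 2 < m by omega),
    enum_initSeg hx (show p + 1 < m by omega), enum_initSeg hx (show p < m by omega)]

theorem PeakFree.not_peak {Y : Finset ℕ} (h : PeakFree Y) {p : ℕ} (hp : p + 3 < Y.card) :
    ¬ Peak (enum Y) p :=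
  h _ (enum_mem (by omega)) _ (enum_mem (by omega)) _ (enum_mem (by omega)) _ (enum_mem hp)
    (incrOn_enum Y _ _ (by omega) (by omega)) (incrOn_enum Y _ _ (by omega) (by omega))
    (incrOn_enum Y _ _ (by omega) (by omega))

theorem exists_step_eq {x : ℕ → ℕ} {m : ℕ} (hx : IncrOn x m) (i t : ℕ) (h : i + t + 1 < m) :
    ∃ p, i ≤ p ∧ p ≤ i + t ∧ dl (x p) (x (p + 1)) = dl (x i) (x (i + t + 1)) := by
  induction t with
  | zero => exact ⟨i, le_rfl, le_rfl, rfl⟩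
  | succ t ih =>
    obtain ⟨p, h1, h2, h3⟩ := ih (by omega)
    have e := dl_trans (hx i (i + t + 1) (by omega) (by omega)).le
      (hx (i + t + 1) (i + t + 1 + 1) (by omega) (by omega)).le
    rcases le_total (dl (x i) (x (i + t + 1))) (dl (x (i + t + 1)) (x (i + t + 1 + 1)))
      with hle | hle
    · rw [max_eq_right hle] at e
      exact ⟨i + t + 1, by omega, by omega, e.symm⟩
    · rw [max_eq_left hle] at e
      exact ⟨p, h1, by omega, h3.trans e.symm⟩

/-- A four-point peak gives a peak at consecutive points: the largest consecutive value between the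
outer points is attained between the inner ones. -/
theorem peakFree_of_no_peak {X : Finset ℕ} (h : ∀ p, p + 3 < X.card → ¬ Peak (enum X) p) :
    PeakFree X := by
  intro a ha b hb c hc e he hab hbc hce hpk
  obtain ⟨i0, hi0, rfl⟩ := exists_enum_eq ha
  obtain ⟨i1, hi1, rfl⟩ := exists_enum_eq hb
  obtain ⟨i2, hi2, rfl⟩ := exists_enum_eq hc
  obtain ⟨i3, hi3, rfl⟩ := exists_enum_eq he
  have hx := incrOn_enum X
  have hmono : ∀ i j, i ≤ j → j < X.card → enum X i ≤ enum X j := by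
    intro i j hij hj
    rcases hij.eq_or_lt with rfl | h1
    · exact le_rfl
    · exact (hx i j h1 hj).le
  have hlt : ∀ i j, i < X.card → enum X i < enum X j → i < j := by
    intro i j hi hij
    by_contra hcon
    have := hmono j i (by omega) hi
    omega
  have l1 := hlt _ _ hi0 hab
  have l2 := hlt _ _ hi1 hbc
  have l3 := hlt _ _ hi2 hce
  obtain ⟨p, p1, p2, p3⟩ := exists_step_eq hx i1 (i2 - i1 - 1) (by omega)
  rw [show i1 + (i2 - i1 - 1) + 1 = i2 by omega] at p3
  obtain ⟨q, rfl⟩ : ∃ q, p = q + 1 := ⟨p - 1, by omega⟩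
  have htot : dl (enum X i0) (enum X i3) = dl (enum X i1) (enum X i2) := by
    rw [dl_trans hab.le (hbc.trans hce).le, dl_trans hbc.le hce.le]
    omega
  have b1 := dl_mono (hmono i0 q (by omega) (by omega)) (hmono q (q + 1) (by omega) (by omega))
    (hmono (q + 1) i3 (by omega) (by omega))
  have b2 := dl_mono (hmono i0 (q + 2) (by omega) (by omega))
    (hmono (q + 2) (q + 3) (by omega) (by omega)) (hmono (q + 3) i3 (by omega) (by omega))
  have n1 := dl_ne (hx q (q + 1) (by omega) (by omega)) (hx (q + 1) (q + 2) (by omega) (by omega))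
  have n2 := dl_ne (hx (q + 1) (q + 2) (by omega) (by omega))
    (hx (q + 2) (q + 3) (by omega) (by omega))
  have p4 : dl (enum X (q + 1)) (enum X (q + 2)) = dl (enum X i1) (enum X i2) := p3
  refine h q (by omega) ⟨?_, ?_⟩ <;> omega

/-! ### The colouring -/

/-- The colour of an `(r+1)`-set whose first peak is at position `p`. -/
def peakColor (k r p : ℕ) : ℕ :=
  if p = 0 then k else if p % 2 = 1 then k + 1 else if r % 2 = 1 then k + 2 else 0

open Classical in
/-- The stepped-up colouring, with values in `ℕ`. -/
noncomputable def stepColor (k r : ℕ) (f : Finset ℕ → Fin k) (Y : Finset ℕ) : ℕ :=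
  if h : ∃ p, p + 3 < Y.card ∧ Peak (enum Y) p then peakColor k r (Nat.find h) else f (diffs Y)

theorem stepColor_of_no_peak {k r : ℕ} {f : Finset ℕ → Fin k} {Y : Finset ℕ}
    (h : ∀ p, p + 3 < Y.card → ¬ Peak (enum Y) p) : stepColor k r f Y = f (diffs Y) := by
  rw [stepColor, dif_neg]
  rintro ⟨p, hp, hP⟩
  exact h p hp hP

theorem stepColor_initSeg_lt {k r m : ℕ} {f : Finset ℕ → Fin k} {x : ℕ → ℕ} (hx : IncrOn x m)
    (h : ∀ p, p + 3 < m → ¬ Peak x p) : stepColor k r f (initSeg x m) < k := by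
  rw [stepColor_of_no_peak]
  · exact (f _).2
  · intro p hp
    rw [card_initSeg hx] at hp
    rw [peak_enum_initSeg hx hp]
    exact h p hp

theorem stepColor_initSeg {k r m p : ℕ} {f : Finset ℕ → Fin k} {x : ℕ → ℕ} (hx : IncrOn x m)
    (hp : p + 3 < m) (hP : Peak x p) (hmin : ∀ q < p, ¬ Peak x q) :
    stepColor k r f (initSeg x m) = peakColor k r p := by
  classical
  have hex : ∃ p, p + 3 < (initSeg x m).card ∧ Peak (enum (initSeg x m)) p :=
    ⟨p, by rw [card_initSeg hx]; exact hp, (peak_enum_initSeg hx hp).2 hP⟩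
  rw [stepColor, dif_pos hex]
  congr 1
  rw [Nat.find_eq_iff]
  refine ⟨⟨by rw [card_initSeg hx]; exact hp, (peak_enum_initSeg hx hp).2 hP⟩, ?_⟩
  rintro q hq ⟨-, hQ⟩
  rw [peak_enum_initSeg hx (by omega)] at hQ
  exact hmin q hq hQ

theorem stepColor_lt {k r : ℕ} (hk : 0 < k) (f : Finset ℕ → Fin k) {Y : Finset ℕ}
    (hY : Y.card = r + 1) : stepColor k r f Y < k + eta r := by
  classical
  unfold stepColor
  split_ifs with h
  · have h1 := (Nat.find_spec h).1
    generalize Nat.find h = p at h1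
    unfold peakColor eta
    split_ifs <;> omega
  · have := (f (diffs Y)).2
    omega

/-- If `r + 2` points have a peak, then omitting the last point and omitting the first point give
different colours. -/
theorem stepColor_windows_ne {k r : ℕ} (hk : 0 < k) (hr : 3 ≤ r) (f : Finset ℕ → Fin k)
    {x : ℕ → ℕ} (hx : IncrOn x (r + 2)) (hP : ∃ p, p + 3 < r + 2 ∧ Peak x p) :
    stepColor k r f (initSeg x (r + 1)) ≠
      stepColor k r f (initSeg (fun i => x (i + 1)) (r + 1)) := by
  classical
  obtain ⟨h1, h2⟩ := Nat.find_spec hP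
  have hmin : ∀ q < Nat.find hP, ¬ Peak x q := fun q hq hQ =>
    Nat.find_min hP hq ⟨by omega, hQ⟩
  generalize Nat.find hP = p at h1 h2 hmin
  have hx1 : IncrOn x (r + 1) := fun i j hij hj => hx i j hij (by omega)
  have hx2 : IncrOn (fun i => x (i + 1)) (r + 1) := fun i j hij hj =>
    hx (i + 1) (j + 1) (by omega) (by omega)
  rcases p with _ | p
  · -- The first peak disappears with the first point; a later one cannot move to position `0`.
    have e1 : stepColor k r f (initSeg x (r + 1)) = peakColor k r 0 :=
      stepColor_initSeg hx1 (by omega) h2 hmin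
    rw [e1]
    have n1 : ¬ Peak (fun i => x (i + 1)) 0 := fun hQ => (lt_asymm h2.2 hQ.1).elim
    by_cases hex : ∃ q, q + 3 < r + 1 ∧ Peak (fun i => x (i + 1)) q
    · obtain ⟨g1, g2⟩ := Nat.find_spec hex
      have gmin : ∀ q < Nat.find hex, ¬ Peak (fun i => x (i + 1)) q := fun q hq hQ =>
        Nat.find_min hex hq ⟨by omega, hQ⟩
      generalize Nat.find hex = q at g1 g2 gmin
      rw [stepColor_initSeg hx2 g1 g2 gmin]
      have hq : q ≠ 0 := by rintro rfl; exact n1 g2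
      unfold peakColor
      split_ifs <;> omega
    · push Not at hex
      have := stepColor_initSeg_lt (k := k) (r := r) (f := f) hx2 hex
      simp only [peakColor, if_true]
      omega
  · have e2 : stepColor k r f (initSeg (fun i => x (i + 1)) (r + 1)) = peakColor k r p :=
      stepColor_initSeg hx2 (by omega) h2 fun q hq hQ => hmin (q + 1) (by omega) hQ
    rw [e2]
    by_cases hlast : p + 1 + 3 < r + 1
    · rw [stepColor_initSeg hx1 hlast h2 hmin]
      unfold peakColor
      split_ifs <;> first | contradiction | omega
    · -- The only peak disappears with the last point, and `p + 3 = r`; so for even `r` the position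
      -- `p` is odd, and `peakColor k r p` is a new colour whatever the parity of `r`.
      have := stepColor_initSeg_lt (k := k) (r := r) (f := f) hx1
        fun q hq => hmin q (by omega)
      unfold peakColor
      split_ifs <;> omega

/-- A homogeneous set with at least `r + 2` points has no peak: otherwise `r + 2` consecutive points
of it have one. -/
theorem peakFree_of_homogeneous {k r c : ℕ} (hk : 0 < k) (hr : 3 ≤ r) (f : Finset ℕ → Fin k)
    {X : Finset ℕ} (hX : r + 2 ≤ X.card)
    (hom : ∀ Y ⊆ X, Y.card = r + 1 → stepColor k r f Y = c) : PeakFree X := by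
  apply peakFree_of_no_peak
  intro p hp hP
  have hinc := incrOn_enum X
  obtain ⟨a, ha1, ha2, ha3⟩ : ∃ a, a ≤ p ∧ a + (r + 2) ≤ X.card ∧ p + 3 < a + (r + 2) :=
    ⟨min p (X.card - (r + 2)), by omega, by omega, by omega⟩
  have hx : IncrOn (fun i => enum X (i + a)) (r + 2) := fun i j hij hj =>
    hinc _ _ (by omega) (by omega)
  have hsub : ∀ b, b + (r + 1) ≤ X.card →
      stepColor k r f (initSeg (fun i => enum X (i + b)) (r + 1)) = c := by
    intro b hb
    apply hom
    · intro y hy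
      obtain ⟨i, hi, rfl⟩ := Finset.mem_image.1 hy
      rw [Finset.mem_range] at hi
      exact enum_mem (by omega)
    · exact card_initSeg fun i j hij hj => hinc _ _ (by omega) (by omega)
  refine stepColor_windows_ne hk hr f hx ⟨p - a, by omega, ?_⟩ ?_
  · simp only [Peak]
    rw [show p - a + a = p by omega, show p - a + 1 + a = p + 1 by omega,
      show p - a + 2 + a = p + 2 by omega, show p - a + 3 + a = p + 3 by omega]
    exact hP
  · rw [hsub a (by omega)]
    have := hsub (a + 1) (by omega)
    rw [← this]
    congr 2
    funext i
    congr 1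
    omega

theorem stmt_0 (k n r : ℕ) (hk : 2 ≤ k) (hr : 3 ≤ r) (hrn : r < n)
    (s : Fin k → ℕ) (hs : ∀ i, r + 1 ≤ s i ∧ s i ≤ n)
    (h : ¬ ArrowsV n r k s) :
    ¬ ArrowsV (2 ^ n) (r + 1) (k + eta r)
        (fun i => if hik : (i : ℕ) < k then s ⟨i, hik⟩ + 1 else r + 2) := by
  unfold ArrowsV at h
  push Not at h
  obtain ⟨f, hf⟩ := h
  intro hA
  obtain ⟨i, X, hXn, hXc, hom⟩ := hA fun Y =>
    if hY : stepColor k r f Y < k + eta r then ⟨stepColor k r f Y, hY⟩ else ⟨0, by omega⟩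
  have hom' : ∀ Y ⊆ X, Y.card = r + 1 → stepColor k r f Y = i := by
    intro Y hYX hY
    have := hom Y hYX hY
    rw [dif_pos (stepColor_lt (by omega) f hY)] at this
    rw [← this]
  have hXr : r + 2 ≤ X.card := by
    rw [hXc]
    dsimp only
    split_ifs with hik
    · have := (hs ⟨i, hik⟩).1
      omega
    · exact le_rfl
  have hfree := peakFree_of_homogeneous (by omega) hr f hXr hom'
  have hval : ∀ Y ⊆ X, Y.card = r + 1 → (f (diffs Y) : ℕ) = i := by
    intro Y hYX hY
    rw [← hom' Y hYX hY, stepColor_of_no_peak fun p hp => (hfree.subset hYX).not_peak hp]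
  have hik : (i : ℕ) < k := by
    obtain ⟨Y, hYX, hY⟩ := Finset.exists_subset_card_eq (show r + 1 ≤ X.card by omega)
    rw [← hval Y hYX hY]
    exact (f _).2
  simp only [hik, dif_pos] at hXc
  obtain ⟨hDc, hDT⟩ := PeakFree.diffs_spec _ X hXc hfree
  obtain ⟨T, hTD, hTc, hT⟩ := hf ⟨i, hik⟩ _ (diffs_subset_range (by omega) hXn) hDc
  obtain ⟨Y, hYX, hYc, rfl⟩ := hDT T hTD
  exact hT (Fin.ext (hval Y hYX (by omega)))
end

section
/- Let α = (log₂ 1073)/6 (≈ 1.678). There exists a real constant β such that for every pair of integers (r, k) with either r = 3 and k ≥ 4, or r ≥ 4 and k ≥ ⌊5r/2⌋ − 5, the Ramsey number satisfies r_k(r+1; r) > tow_r((α/2)·(k − 5r/2) + β). -/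
/-!
The bound comes from proper colourings of shift graphs (Duffus, Lefmann, Rödl). Call a colouring
`φ` of increasing `r`-tuples from `{0, …, n-1}` a shift colouring if for every increasing
`(r+1)`-tuple the colours of the tuple without its last entry and of the tuple without its first
entry differ; such a `φ` has no monochromatic `(r+1)`-set at all (`not_arrows_of_shiftCol`).

* Pairs from `{0, …, 2^k-1}` have a shift colouring with `k` colours: colour `x < y` by a binary
  digit which is `1` in `y` and `0` in `x` (`shiftCol_two`).
* A shift colouring of `r`-tuples with `C(k, ⌊k/2⌋)` colours gives one of `(r+1)`-tuples with `k`
  colours: read the old colours as `⌊k/2⌋`-subsets of a `k`-set, and colour a tuple by an element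
  of the set of its initial part that is missing from the set of its final part
  (`ShiftCol.step`).

With `a₀ = k` and `aⱼ₊₁ = C(aⱼ, ⌊aⱼ/2⌋)` this gives `r_k(r+1; r) > 2 ^ a_{r-2}`. Since
`C(a, ⌊a/2⌋) ≥ 2 ^ a / (a + 1)`, the sequence `aⱼ` grows like a tower: `2 t ≤ a` implies
`2 · 2 ^ t ≤ C(a, ⌊a/2⌋)` once `a ≥ 10`, and the first step loses only a factor `k + 1`, which is
absorbed because the slope `log₂ 1073 / 12` is smaller than `1`.

As the Ramsey number is an infimum in `ℕ`, its lower bound also needs that some `n` satisfies the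
arrow relation, which is Ramsey's theorem (`exists_arrows`).
-/

/-- The diagonal arrow relation `n → (s)_k^r`. -/
def Arrows (n r k s : ℕ) : Prop :=
  ∀ f : Finset ℕ → Fin k, ∃ i : Fin k, ∃ X ⊆ Finset.range n,
    X.card = s ∧ ∀ Y ⊆ X, Y.card = r → f Y = i

/-- The Ramsey number `r_k(s; r)`: the least `n` with `n → (s)_k^r`. -/
noncomputable def ramsey (k s r : ℕ) : ℕ := sInf {n | Arrows n r k s}

/-- Tower function on real arguments: `tow 1 x = x`, `tow (r+1) x = 2 ^ tow r x`. -/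
noncomputable def tow (r : ℕ) (x : ℝ) : ℝ := (fun y : ℝ => (2 : ℝ) ^ y)^[r - 1] x

/-! ### Ramsey's theorem -/

/-- Given Ramsey's theorem for `r`-sets, large sets contain an `m`-set `Y` on which the colour of
an `(r+1)`-set depends only on its least element. -/
lemma exists_minHomogeneous (k r : ℕ) (hk : 0 < k)
    (ih : ∀ s, ∃ n, ∀ X : Finset ℕ, n ≤ X.card → ∀ f : Finset ℕ → Fin k,
      ∃ i, ∃ Y ⊆ X, Y.card = s ∧ ∀ Z ⊆ Y, Z.card = r → f Z = i) (m : ℕ) :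
    ∃ n, ∀ X : Finset ℕ, n ≤ X.card → ∀ f : Finset ℕ → Fin k,
      ∃ c : ℕ → Fin k, ∃ Y ⊆ X, Y.card = m ∧
        ∀ a ∈ Y, ∀ Z ⊆ Y, (∀ z ∈ Z, a < z) → Z.card = r → f (insert a Z) = c a := by
  induction m with
  | zero =>
    refine ⟨0, fun X _ f => ⟨fun _ => ⟨0, hk⟩, ∅, by simp, rfl, ?_⟩⟩
    simp
  | succ m ihm =>
    obtain ⟨n, hn⟩ := ihm
    obtain ⟨N, hN⟩ := ih n
    refine ⟨N + 1, fun X hX f => ?_⟩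
    have hne : X.Nonempty := Finset.card_pos.mp (by omega)
    set a := X.min' hne with ha
    have haX : a ∈ X := Finset.min'_mem _ _
    obtain ⟨i, W, hWX, hWc, hW⟩ := hN (X.erase a)
      (by rw [Finset.card_erase_of_mem haX]; omega) (fun Z => f (insert a Z))
    obtain ⟨c, Y, hYW, hYc, hY⟩ := hn W hWc.ge f
    have hlt : ∀ y ∈ Y, a < y := fun y hy => by
      have h1 := Finset.mem_erase.mp (hWX (hYW hy))
      exact lt_of_le_of_ne (Finset.min'_le _ _ h1.2) (Ne.symm h1.1)
    have haY : a ∉ Y := fun h => lt_irrefl _ (hlt a h)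
    refine ⟨Function.update c a i, insert a Y, ?_, ?_, ?_⟩
    · exact Finset.insert_subset haX
        ((hYW.trans hWX).trans (Finset.erase_subset _ _))
    · rw [Finset.card_insert_of_notMem haY, hYc]
    · intro b hb Z hZ hbZ hZc
      have haZ : a ∉ Z := fun h => by
        rcases Finset.mem_insert.mp hb with rfl | hb
        · exact lt_irrefl _ (hbZ _ h)
        · exact lt_asymm (hlt b hb) (hbZ _ h)
      have hZY : Z ⊆ Y := (Finset.subset_insert_iff_of_notMem haZ).mp hZ
      rcases Finset.mem_insert.mp hb with rfl | hb
      · simpa using hW Z (hZY.trans hYW) hZc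
      · have : b ≠ a := (hlt b hb).ne'
        rw [Function.update_of_ne this]
        exact hY b hb Z hZY hbZ hZc

lemma exists_ramsey (k : ℕ) (hk : 0 < k) (r : ℕ) :
    ∀ s, ∃ n, ∀ X : Finset ℕ, n ≤ X.card → ∀ f : Finset ℕ → Fin k,
      ∃ i, ∃ Y ⊆ X, Y.card = s ∧ ∀ Z ⊆ Y, Z.card = r → f Z = i := by
  induction r with
  | zero =>
    intro s
    refine ⟨s, fun X hX f => ?_⟩
    obtain ⟨Y, hY, hYc⟩ := Finset.exists_subset_card_eq hX
    refine ⟨f ∅, Y, hY, hYc, fun Z _ hZ => ?_⟩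
    rw [Finset.card_eq_zero.mp hZ]
  | succ r ih =>
    intro s
    obtain ⟨n, hn⟩ := exists_minHomogeneous k r hk ih (k * s + 1)
    refine ⟨n, fun X hX f => ?_⟩
    obtain ⟨c, Y, hYX, hYc, hY⟩ := hn X hX f
    obtain ⟨i, -, hi⟩ := Finset.exists_lt_card_fiber_of_mul_lt_card_of_maps_to
      (s := Y) (t := (Finset.univ : Finset (Fin k))) (f := c) (n := s)
      (fun _ _ => Finset.mem_univ _) (by simp [hYc])
    obtain ⟨V, hV, hVc⟩ := Finset.exists_subset_card_eq hi.le
    refine ⟨i, V, (hV.trans (Finset.filter_subset _ _)).trans hYX, hVc, fun Z hZ hZc => ?_⟩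
    have hne : Z.Nonempty := Finset.card_pos.mp (by omega)
    have hm := Finset.min'_mem Z hne
    have hmY := Finset.mem_filter.mp (hV (hZ hm))
    have key := hY (Z.min' hne) hmY.1 (Z.erase (Z.min' hne))
      (fun z hz => (Finset.mem_filter.mp (hV (hZ (Finset.mem_of_mem_erase hz)))).1)
      (fun z hz => Finset.min'_lt_of_mem_erase_min' _ _ hz)
      (by rw [Finset.card_erase_of_mem hm]; omega)
    rw [Finset.insert_erase hm] at key
    rw [key, hmY.2]

lemma exists_arrows (k : ℕ) (hk : 0 < k) (r s : ℕ) : ∃ n, Arrows n r k s := by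
  obtain ⟨n, hn⟩ := exists_ramsey k hk r s
  exact ⟨n, fun f => hn (Finset.range n) (by simp) f⟩

lemma lt_ramsey {n r k s : ℕ} (hk : 0 < k) (h : ¬ Arrows n r k s) : n < ramsey k s r := by
  by_contra! hle
  refine h fun f => ?_
  obtain ⟨i, X, hX, hXY⟩ := (Nat.sInf_mem (exists_arrows k hk r s) : Arrows (ramsey k s r) r k s) f
  exact ⟨i, X, hX.trans (Finset.range_subset_range.mpr hle), hXY⟩

/-! ### Colourings of shift graphs -/

/-- There is a proper `k`-colouring of the shift graph on increasing `r`-tuples from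
`{0, …, n-1}`: dropping the last and dropping the first entry of an increasing `(r+1)`-tuple gives
tuples of different colours. The colouring is total on `Fin r → ℕ`; its values on tuples which
are not increasing or not bounded by `n` are irrelevant. -/
def ShiftCol (k n r : ℕ) : Prop :=
  ∃ φ : (Fin r → ℕ) → Fin k, ∀ t : Fin (r + 1) → ℕ, StrictMono t → (∀ i, t i < n) →
    φ (fun i => t i.castSucc) ≠ φ (fun i => t i.succ)

lemma not_arrows_of_shiftCol {k n r : ℕ} (hk : 0 < k) (h : ShiftCol k n r) :
    ¬ Arrows n r k (r + 1) := by
  obtain ⟨φ, hφ⟩ := h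
  intro hA
  obtain ⟨i, X, hX, hXc, hXY⟩ := hA fun Y =>
    if h : Y.card = r then φ (Y.orderEmbOfFin h) else ⟨0, hk⟩
  have hmem : ∀ j, X.orderEmbOfFin hXc j ∈ X := Finset.orderEmbOfFin_mem X hXc
  -- The tuple `X ∘ g` enumerates its own image in increasing order.
  have key : ∀ g : Fin r → Fin (r + 1), StrictMono g →
      φ (fun j => X.orderEmbOfFin hXc (g j)) = i := by
    intro g hg
    have hs : StrictMono (fun j => X.orderEmbOfFin hXc (g j)) :=
      (X.orderEmbOfFin hXc).strictMono.comp hg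
    have hc : (Finset.univ.image (fun j => X.orderEmbOfFin hXc (g j))).card = r := by
      rw [Finset.card_image_of_injective _ hs.injective]; simp
    have h1 := hXY (Finset.univ.image (fun j => X.orderEmbOfFin hXc (g j)))
      (by intro x hx; obtain ⟨j, -, rfl⟩ := Finset.mem_image.mp hx; exact hmem _) hc
    rw [dif_pos hc] at h1
    rw [← h1, ← Finset.orderEmbOfFin_unique hc
      (fun j => Finset.mem_image_of_mem _ (Finset.mem_univ j)) hs]
  refine hφ (X.orderEmbOfFin hXc) (X.orderEmbOfFin hXc).strictMono
    (fun j => Finset.mem_range.mp (hX (hmem j))) ?_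
  rw [key Fin.castSucc Fin.strictMono_castSucc, key Fin.succ Fin.strictMono_succ]

lemma shiftCol_two (k : ℕ) (hk : 0 < k) : ShiftCol k (2 ^ k) 2 := by
  have hbit : ∀ x y : ℕ, ∃ i : Fin k, x < y → y < 2 ^ k →
      y.testBit i = true ∧ x.testBit i = false := by
    intro x y
    by_cases h : x < y ∧ y < 2 ^ k
    · by_contra! hcon
      -- Otherwise every binary digit of `y` is one of `x`, so `y ≤ x`.
      have hand : y &&& x = y := by
        refine Nat.eq_of_testBit_eq fun j => ?_
        rw [Nat.testBit_and]
        by_cases hj : j < k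
        · have := (hcon ⟨j, hj⟩).2.2
          cases hy : y.testBit j <;> simp_all
        · have : y.testBit j = false := Nat.testBit_lt_two_pow
            (h.2.trans_le (Nat.pow_le_pow_right (by norm_num) (by omega)))
          simp [this]
      have : y ≤ x := hand ▸ Nat.and_le_right
      omega
    · exact ⟨⟨0, hk⟩, fun h1 h2 => absurd ⟨h1, h2⟩ h⟩
  choose b hb using hbit
  refine ⟨fun t => b (t 0) (t 1), fun t ht hn heq => ?_⟩
  have h01 : t 0 < t 1 := ht (by decide)
  have h12 : t 1 < t 2 := ht (by decide)
  have e1 := (hb _ _ h01 (hn 1)).1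
  have e2 := (hb _ _ h12 (hn 2)).2
  have heq' : b (t 0) (t 1) = b (t 1) (t 2) := heq
  rw [heq', e2] at e1
  exact Bool.false_ne_true e1

lemma ShiftCol.step {k n r : ℕ} (hk : 0 < k) (h : ShiftCol (k.choose (k / 2)) n r) :
    ShiftCol k n (r + 1) := by
  obtain ⟨φ, hφ⟩ := h
  have e : Fin (k.choose (k / 2)) ≃ {s : Finset (Fin k) // s.card = k / 2} :=
    Fintype.equivOfCardEq (by simp)
  -- Distinct sets of the same size: each has an element outside the other.
  have hd : ∀ p q, ∃ i : Fin k, p ≠ q → i ∈ (e p).1 ∧ i ∉ (e q).1 := by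
    intro p q
    by_cases hpq : p = q
    · exact ⟨⟨0, hk⟩, fun h => absurd hpq h⟩
    · by_contra! hcon
      refine hpq (e.injective (Subtype.ext (Finset.eq_of_subset_of_card_le
        (fun i hi => (hcon i).2 hi) ?_)))
      rw [(e p).2, (e q).2]
  choose d hd using hd
  refine ⟨fun u => d (φ fun i => u i.castSucc) (φ fun i => u i.succ), fun t ht hn heq => ?_⟩
  have h1 := (hd _ _ (hφ (fun i => t i.castSucc)
    (ht.comp Fin.strictMono_castSucc) (fun i => hn _))).2
  have h2 := (hd _ _ (hφ (fun i => t i.succ)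
    (ht.comp Fin.strictMono_succ) (fun i => hn _))).1
  simp only [Fin.succ_castSucc] at h1 h2 heq
  rw [heq] at h1
  exact h1 h2

/-- The iterated central binomial coefficients `a₀ = k`, `aⱼ₊₁ = C(aⱼ, ⌊aⱼ/2⌋)`. -/
def iterCentral (k : ℕ) : ℕ → ℕ
  | 0 => k
  | j + 1 => (iterCentral k j).choose (iterCentral k j / 2)

lemma iterCentral_pos {k : ℕ} (hk : 0 < k) (j : ℕ) : 0 < iterCentral k j := by
  cases j with
  | zero => exact hk
  | succ j => exact Nat.choose_pos (Nat.div_le_self _ _)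

lemma ShiftCol.iterate {k n : ℕ} (hk : 0 < k) (j : ℕ) :
    ∀ r, ShiftCol (iterCentral k j) n r → ShiftCol k n (r + j) := by
  induction j with
  | zero => exact fun r h => h
  | succ j ih =>
    intro r h
    have := ih (r + 1) (ShiftCol.step (iterCentral_pos hk j) h)
    rwa [show r + 1 + j = r + (j + 1) by ring] at this

lemma two_pow_iterCentral_lt_ramsey {k : ℕ} (hk : 0 < k) (j : ℕ) :
    2 ^ iterCentral k j < ramsey k (j + 2 + 1) (j + 2) := by
  rw [add_comm j 2]
  exact lt_ramsey hk (not_arrows_of_shiftCol hk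
    (ShiftCol.iterate hk j 2 (shiftCol_two _ (iterCentral_pos hk j))))

/-! ### Growth of iterated central binomial coefficients -/

lemma two_pow_le_central (a : ℕ) : 2 ^ a ≤ (a + 1) * a.choose (a / 2) := by
  rw [← Nat.sum_range_choose a]
  calc ∑ m ∈ Finset.range (a + 1), a.choose m
      ≤ ∑ _m ∈ Finset.range (a + 1), a.choose (a / 2) :=
        Finset.sum_le_sum fun m _ => Nat.choose_le_middle m a
    _ = _ := by simp

lemma four_mul_sq_le_two_pow {a : ℕ} (ha : 10 ≤ a) : 4 * (a + 1) ^ 2 ≤ 2 ^ a := by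
  induction a, ha using Nat.le_induction with
  | base => norm_num
  | succ a ha ih => rw [pow_succ 2 a]; nlinarith

lemma ten_le_central {a : ℕ} (ha : 10 ≤ a) : 10 ≤ a.choose (a / 2) := by
  have := Nat.choose_le_middle 1 a
  rw [Nat.choose_one_right] at this
  omega

lemma two_mul_two_rpow_le_central {a : ℕ} (ha : 10 ≤ a) {t : ℝ} (ht : 2 * t ≤ a) :
    2 * (2 : ℝ) ^ t ≤ (a.choose (a / 2) : ℝ) := by
  have h1 : (2 : ℝ) ^ a ≤ ((a : ℝ) + 1) * (a.choose (a / 2) : ℝ) := by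
    exact_mod_cast two_pow_le_central a
  have h2 : 4 * ((a : ℝ) + 1) ^ 2 ≤ 2 ^ a := by exact_mod_cast four_mul_sq_le_two_pow ha
  set z : ℝ := (2 : ℝ) ^ ((a : ℝ) / 2) with hz
  have hz0 : 0 < z := by positivity
  have hzz : z * z = 2 ^ a := by
    rw [hz, ← Real.rpow_add (by norm_num), add_halves, Real.rpow_natCast]
  have h3 : (2 : ℝ) ^ t ≤ z := Real.rpow_le_rpow_of_exponent_le (by norm_num) (by linarith)
  have h4 : 2 * ((a : ℝ) + 1) ≤ z := by
    refine le_of_sq_le_sq ?_ hz0.le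
    nlinarith
  have h5 : ((a : ℝ) + 1) * (2 * z) ≤ ((a : ℝ) + 1) * (a.choose (a / 2) : ℝ) := by nlinarith
  have h6 := le_of_mul_le_mul_left h5 (by positivity)
  linarith

/-- The first step, where the argument of the tower is linear in `k` with slope `11/12 < 1`. -/
lemma first_step (k : ℕ) {x : ℝ} (hx : x ≤ 11 / 12 * k - 6) :
    2 * (2 : ℝ) ^ x ≤ (k.choose (k / 2) : ℝ) := by
  have h1 : (2 : ℝ) ^ k ≤ ((k : ℝ) + 1) * (k.choose (k / 2) : ℝ) := by
    exact_mod_cast two_pow_le_central k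
  set z : ℝ := (2 : ℝ) ^ ((k : ℝ) / 12) with hz
  have hzlow : 1 + (k : ℝ) / 24 ≤ z := by
    rw [hz, Real.rpow_def_of_pos (by norm_num)]
    have hl : (1 / 2 : ℝ) ≤ Real.log 2 := by linarith [Real.log_two_gt_d9]
    have := Real.add_one_le_exp (Real.log 2 * ((k : ℝ) / 12))
    have hk0 : (0 : ℝ) ≤ k := by positivity
    nlinarith
  have h2 : 2 * (2 : ℝ) ^ x * (32 * z) ≤ 2 ^ k := by
    have e : 2 * (2 : ℝ) ^ x * (32 * z) = (2 : ℝ) ^ (x + k / 12 + 6) := by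
      rw [Real.rpow_add (by norm_num), Real.rpow_add (by norm_num), ← hz,
        show (2 : ℝ) ^ (6 : ℝ) = 64 by norm_num]
      ring
    rw [e, ← Real.rpow_natCast]
    exact Real.rpow_le_rpow_of_exponent_le (by norm_num) (by linarith)
  have hk0 : (0 : ℝ) ≤ k := by positivity
  have hp : (0 : ℝ) < 2 ^ x := by positivity
  have h3 : ((k : ℝ) + 1) * (2 * (2 : ℝ) ^ x) ≤ ((k : ℝ) + 1) * (k.choose (k / 2) : ℝ) := by
    nlinarith
  exact le_of_mul_le_mul_left h3 (by positivity)

lemma ten_le_iterCentral {k : ℕ} (hk : 5 ≤ k) (j : ℕ) : 10 ≤ iterCentral k (j + 1) := by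
  induction j with
  | zero =>
    change 10 ≤ k.choose (k / 2)
    calc 10 = Nat.choose 5 2 := rfl
      _ ≤ k.choose 2 := Nat.choose_le_choose 2 hk
      _ ≤ _ := Nat.choose_le_middle 2 k
  | succ j ih => exact ten_le_central ih

lemma tower_le_iterCentral {k : ℕ} {x : ℝ} (hx : x ≤ 11 / 12 * k - 6) (j : ℕ)
    (hkj : j = 0 ∨ 5 ≤ k) :
    2 * (fun y : ℝ => (2 : ℝ) ^ y)^[j + 1] x ≤ iterCentral k (j + 1) := by
  induction j with
  | zero => exact first_step k hx
  | succ j ih =>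
    have hk : 5 ≤ k := by omega
    rw [Function.iterate_succ_apply']
    exact two_mul_two_rpow_le_central (ten_le_iterCentral hk j) (ih (Or.inr hk))

lemma slope_le : Real.logb 2 1073 / 6 / 2 ≤ 11 / 12 := by
  have : Real.logb 2 1073 ≤ 11 := by
    rw [Real.logb_le_iff_le_rpow (by norm_num) (by norm_num)]
    norm_num
  linarith

theorem stmt_1 : ∃ β : ℝ, ∀ r k : ℕ,
    ((r = 3 ∧ 4 ≤ k) ∨ (4 ≤ r ∧ 5 * r / 2 - 5 ≤ k)) →
    tow r (Real.logb 2 1073 / 6 / 2 * ((k : ℝ) - 5 * (r : ℝ) / 2) + β)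
      < (ramsey k (r + 1) r : ℝ) := by
  refine ⟨-6, fun r k h => ?_⟩
  obtain ⟨j, rfl⟩ : ∃ j, r = j + 1 + 2 := ⟨r - 3, by omega⟩
  have hk : 0 < k := by omega
  set x : ℝ := Real.logb 2 1073 / 6 / 2 * ((k : ℝ) - 5 * ((j + 1 + 2 : ℕ) : ℝ) / 2) + -6 with hxdef
  have hx : x ≤ 11 / 12 * k - 6 := by
    have h0 : 0 ≤ Real.logb 2 1073 / 6 / 2 := by
      have := Real.logb_nonneg (b := 2) (x := 1073) (by norm_num) (by norm_num)
      positivity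
    have hk0 : (0 : ℝ) ≤ k := by positivity
    have hj0 : (0 : ℝ) ≤ ((j + 1 + 2 : ℕ) : ℝ) := by positivity
    rw [hxdef]
    nlinarith [mul_nonneg h0 hj0, mul_le_mul_of_nonneg_right slope_le hk0]
  have h1 := tower_le_iterCentral hx j (by omega)
  have hpos : 0 ≤ (fun y : ℝ => (2 : ℝ) ^ y)^[j + 1] x := by
    rw [Function.iterate_succ_apply']; positivity
  have h2 : tow (j + 1 + 2) x ≤ (2 : ℝ) ^ iterCentral k (j + 1) := by
    change (fun y : ℝ => (2 : ℝ) ^ y)^[j + 1 + 1] x ≤ _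
    rw [Function.iterate_succ_apply', ← Real.rpow_natCast]
    exact Real.rpow_le_rpow_of_exponent_le (by norm_num) (by linarith)
  refine h2.trans_lt ?_
  exact_mod_cast two_pow_iterCentral_lt_ramsey hk (j + 1)
end

section
/- A finite set S ⊆ ℕ is a caterpillar if and only if S has no subset that is a non-caterpillar of type (2, 2). -/
/-!
Both directions rest on `splitIdx_eq_of_subset`: a subset `T ⊆ S` that meets both halves of the
splitting partition `(S₀ | S₁)` splits at the same index as `S`, so that `T₀ = T ∩ S₀` and
`T₁ = T ∩ S₁`.

Consequently caterpillars are closed under subsets (`IsCaterpillar.subset`): a subset either lies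
in one half of the splitting partition or inherits a partition with a singleton half. In
particular a caterpillar has no non-caterpillar subset at all.

Conversely, if `S` is not a caterpillar, descend through the halves left over by singletons until
both halves have at least two elements; two elements from each half form a set of type `(2, 2)`
(`exists_type_two_two`).
-/

/-- The first splitting index `s(S)` of a finite set of naturals: the largest bit position
at which two elements of `S` differ (where `d(n)` is the set of bit positions of `n`). -/
noncomputable def splitIdx (S : Finset ℕ) : ℕ :=
  sSup {i | ∃ x ∈ S, ∃ y ∈ S, Nat.testBit x i = true ∧ Nat.testBit y i = false}

/-- `S₀`: the elements of `S` whose bit at the first splitting index is `0`. -/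
noncomputable def lowerPart (S : Finset ℕ) : Finset ℕ :=
  S.filter fun x => Nat.testBit x (splitIdx S) = false

/-- `S₁`: the elements of `S` whose bit at the first splitting index is `1`. -/
noncomputable def upperPart (S : Finset ℕ) : Finset ℕ :=
  S.filter fun x => Nat.testBit x (splitIdx S) = true

/-- The family of caterpillars: the empty set and singletons are caterpillars, and a set
with at least two elements and splitting partition `(S₀ | S₁)` is a caterpillar iff one
of `S₀`, `S₁` is a singleton and the other is a caterpillar. -/
inductive IsCaterpillar : Finset ℕ → Prop where
  | small (S : Finset ℕ) : S.card ≤ 1 → IsCaterpillar S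
  | left (S : Finset ℕ) : 2 ≤ S.card → (lowerPart S).card = 1 →
      IsCaterpillar (upperPart S) → IsCaterpillar S
  | right (S : Finset ℕ) : 2 ≤ S.card → (upperPart S).card = 1 →
      IsCaterpillar (lowerPart S) → IsCaterpillar S

/-- `δ(S) = { s({x,y}) : x, y ∈ S, x ≠ y }`. -/
noncomputable def deltaSet (S : Finset ℕ) : Finset ℕ :=
  (Finset.powersetCard 2 S).image splitIdx

lemma upperPart_card_lt (S : Finset ℕ) (h : (lowerPart S).card = 1) :
    (upperPart S).card < S.card := by
  obtain ⟨x, hx⟩ := Finset.card_eq_one.mp h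
  have hxl : x ∈ lowerPart S := by simp [hx]
  have hxS : x ∈ S := (Finset.mem_filter.mp hxl).1
  have hxb : Nat.testBit x (splitIdx S) = false := (Finset.mem_filter.mp hxl).2
  apply Finset.card_lt_card
  have hsub : upperPart S ⊆ S := Finset.filter_subset _ _
  rw [Finset.ssubset_iff_of_subset hsub]
  exact ⟨x, hxS, by simp [upperPart, hxb]⟩

lemma lowerPart_card_lt (S : Finset ℕ) (h : (upperPart S).card = 1) :
    (lowerPart S).card < S.card := by
  obtain ⟨x, hx⟩ := Finset.card_eq_one.mp h
  have hxl : x ∈ upperPart S := by simp [hx]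
  have hxS : x ∈ S := (Finset.mem_filter.mp hxl).1
  have hxb : Nat.testBit x (splitIdx S) = true := (Finset.mem_filter.mp hxl).2
  apply Finset.card_lt_card
  have hsub : lowerPart S ⊆ S := Finset.filter_subset _ _
  rw [Finset.ssubset_iff_of_subset hsub]
  exact ⟨x, hxS, by simp [lowerPart, hxb]⟩

/-- The type `t(S)` of a (non-caterpillar) finite set, defined recursively via the
splitting partition `S = (S₀ | S₁)`: `t(S) = (|S₀|, |S₁|)` if `|S₀|, |S₁| ≥ 2`;
`t(S) = t(S₀)` if `|S₁| = 1`; `t(S) = t(S₁)` if `|S₀| = 1`. -/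
noncomputable def typeOf (S : Finset ℕ) : ℕ × ℕ :=
  if h1 : (lowerPart S).card = 1 then typeOf (upperPart S)
  else if h2 : (upperPart S).card = 1 then typeOf (lowerPart S)
  else ((lowerPart S).card, (upperPart S).card)
termination_by S.card
decreasing_by
  · exact upperPart_card_lt S h1
  · exact lowerPart_card_lt S h2

/-- The set whose supremum is `splitIdx S` is bounded, because a natural number has finitely many
nonzero bits. -/
lemma bddAbove_split (S : Finset ℕ) :
    BddAbove {i | ∃ x ∈ S, ∃ y ∈ S, Nat.testBit x i = true ∧ Nat.testBit y i = false} := by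
  refine ⟨S.sup id, ?_⟩
  rintro i ⟨x, hx, y, hy, h1, h2⟩
  have hi : 2 ^ i ≤ x := Nat.ge_two_pow_of_testBit h1
  have hxs : x ≤ S.sup id := Finset.le_sup (f := id) hx
  exact (Nat.lt_two_pow_self.le.trans hi).trans hxs

lemma exists_split {S : Finset ℕ} (hS : 2 ≤ S.card) :
    ∃ x ∈ S, ∃ y ∈ S, Nat.testBit x (splitIdx S) = true ∧
      Nat.testBit y (splitIdx S) = false := by
  refine Nat.sSup_mem (s := {i | ∃ x ∈ S, ∃ y ∈ S, Nat.testBit x i = true ∧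
    Nat.testBit y i = false}) ?_ (bddAbove_split S)
  obtain ⟨a, ha, b, hb, hab⟩ := Finset.one_lt_card.mp hS
  obtain ⟨i, hi⟩ := Nat.exists_testBit_ne_of_ne hab
  cases h : Nat.testBit a i
  · exact ⟨i, b, hb, a, ha, by simpa [h] using hi, h⟩
  · exact ⟨i, a, ha, b, hb, h, by simpa [h] using hi⟩

lemma splitIdx_eq_of_subset {S T : Finset ℕ} (hTS : T ⊆ S)
    (h0 : ∃ y ∈ T, Nat.testBit y (splitIdx S) = false)
    (h1 : ∃ x ∈ T, Nat.testBit x (splitIdx S) = true) :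
    splitIdx T = splitIdx S := by
  obtain ⟨y, hy, hy0⟩ := h0
  obtain ⟨x, hx, hx1⟩ := h1
  have hmem : splitIdx S ∈ {i | ∃ x ∈ T, ∃ y ∈ T, Nat.testBit x i = true ∧
      Nat.testBit y i = false} := ⟨x, hx, y, hy, hx1, hy0⟩
  apply le_antisymm
  · refine csSup_le_csSup (bddAbove_split S) ⟨_, hmem⟩ ?_
    rintro i ⟨a, ha, b, hb, h⟩
    exact ⟨a, hTS ha, b, hTS hb, h⟩
  · exact le_csSup (bddAbove_split T) hmem

/-- A subset of `S` lies in one of the halves of the splitting partition, or its own splitting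
partition is the trace of that of `S`. -/
lemma subset_cases {S T : Finset ℕ} (hTS : T ⊆ S) :
    T ⊆ lowerPart S ∨ T ⊆ upperPart S ∨
      ((lowerPart T).Nonempty ∧ (upperPart T).Nonempty ∧
        lowerPart T ⊆ lowerPart S ∧ upperPart T ⊆ upperPart S) := by
  by_cases h1 : ∃ x ∈ T, Nat.testBit x (splitIdx S) = true
  · by_cases h0 : ∃ y ∈ T, Nat.testBit y (splitIdx S) = false
    · have hs := splitIdx_eq_of_subset hTS h0 h1
      obtain ⟨y, hy, hy0⟩ := h0
      obtain ⟨x, hx, hx1⟩ := h1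
      refine Or.inr (Or.inr ⟨⟨y, ?_⟩, ⟨x, ?_⟩, ?_, ?_⟩)
      · simp [lowerPart, hs, hy, hy0]
      · simp [upperPart, hs, hx, hx1]
      · simpa only [lowerPart, hs] using Finset.filter_subset_filter _ hTS
      · simpa only [upperPart, hs] using Finset.filter_subset_filter _ hTS
    · push Not at h0
      refine Or.inr (Or.inl fun z hz => ?_)
      simpa [upperPart, hTS hz] using h0 z hz
  · push Not at h1
    refine Or.inl fun z hz => ?_
    simpa [lowerPart, hTS hz] using h1 z hz

lemma IsCaterpillar.subset {S : Finset ℕ} (hS : IsCaterpillar S) :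
    ∀ T ⊆ S, IsCaterpillar T := by
  induction hS with
  | small S h => exact fun T hT => .small T ((Finset.card_le_card hT).trans h)
  | left S h2 h1 _ ih =>
    intro T hT
    by_cases hc : T.card ≤ 1
    · exact .small T hc
    rcases subset_cases hT with h | h | ⟨hl, _, hll, huu⟩
    · exact .small T ((Finset.card_le_card h).trans h1.le)
    · exact ih T h
    · exact .left T (by omega)
        (le_antisymm ((Finset.card_le_card hll).trans h1.le) hl.card_pos) (ih _ huu)
  | right S h2 h1 _ ih =>
    intro T hT
    by_cases hc : T.card ≤ 1
    · exact .small T hc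
    rcases subset_cases hT with h | h | ⟨_, hu, hll, huu⟩
    · exact ih T h
    · exact .small T ((Finset.card_le_card h).trans h1.le)
    · exact .right T (by omega)
        (le_antisymm ((Finset.card_le_card huu).trans h1.le) hu.card_pos) (ih _ hll)

/-- Prescribed nonempty subsets of the two halves of `S` are the two halves of their union. -/
lemma parts_union {S A B : Finset ℕ} (hA : A ⊆ lowerPart S) (hB : B ⊆ upperPart S)
    (hA0 : A.Nonempty) (hB0 : B.Nonempty) :
    lowerPart (A ∪ B) = A ∧ upperPart (A ∪ B) = B := by
  have hA' : ∀ z ∈ A, z ∈ S ∧ Nat.testBit z (splitIdx S) = false :=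
    fun z hz => Finset.mem_filter.mp (hA hz)
  have hB' : ∀ z ∈ B, z ∈ S ∧ Nat.testBit z (splitIdx S) = true :=
    fun z hz => Finset.mem_filter.mp (hB hz)
  obtain ⟨a, ha⟩ := hA0
  obtain ⟨b, hb⟩ := hB0
  have hs : splitIdx (A ∪ B) = splitIdx S :=
    splitIdx_eq_of_subset
      (Finset.union_subset (fun z hz => (hA' z hz).1) (fun z hz => (hB' z hz).1))
      ⟨a, Finset.mem_union_left _ ha, (hA' a ha).2⟩
      ⟨b, Finset.mem_union_right _ hb, (hB' b hb).2⟩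
  constructor
  · ext z
    simp only [lowerPart, hs, Finset.mem_filter, Finset.mem_union]
    grind
  · ext z
    simp only [upperPart, hs, Finset.mem_filter, Finset.mem_union]
    grind

lemma exists_type_two_two (S : Finset ℕ) (hS : ¬ IsCaterpillar S) :
    ∃ T ⊆ S, ¬ IsCaterpillar T ∧ typeOf T = (2, 2) := by
  induction hn : S.card using Nat.strong_induction_on generalizing S with
  | _ n ih =>
    subst hn
    have hc : 2 ≤ S.card := by
      by_contra h
      exact hS (.small S (by omega))
    have hlS : lowerPart S ⊆ S := Finset.filter_subset _ _
    have huS : upperPart S ⊆ S := Finset.filter_subset _ _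
    by_cases hl : (lowerPart S).card = 1
    · obtain ⟨T, hT, h⟩ := ih _ (upperPart_card_lt S hl) (upperPart S)
        (fun h => hS (.left S hc hl h)) rfl
      exact ⟨T, hT.trans huS, h⟩
    by_cases hu : (upperPart S).card = 1
    · obtain ⟨T, hT, h⟩ := ih _ (lowerPart_card_lt S hu) (lowerPart S)
        (fun h => hS (.right S hc hu h)) rfl
      exact ⟨T, hT.trans hlS, h⟩
    obtain ⟨x, hx, y, hy, hx1, hy0⟩ := exists_split hc
    have hl0 : 0 < (lowerPart S).card :=
      Finset.card_pos.mpr ⟨y, Finset.mem_filter.mpr ⟨hy, hy0⟩⟩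
    have hu0 : 0 < (upperPart S).card :=
      Finset.card_pos.mpr ⟨x, Finset.mem_filter.mpr ⟨hx, hx1⟩⟩
    obtain ⟨A, hA, hA2⟩ := Finset.exists_subset_card_eq (show 2 ≤ (lowerPart S).card by omega)
    obtain ⟨B, hB, hB2⟩ := Finset.exists_subset_card_eq (show 2 ≤ (upperPart S).card by omega)
    obtain ⟨hTl, hTu⟩ := parts_union hA hB (Finset.card_pos.mp (by omega))
      (Finset.card_pos.mp (by omega))
    refine ⟨A ∪ B, Finset.union_subset (hA.trans hlS) (hB.trans huS), fun hcat => ?_, ?_⟩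
    · cases hcat with
      | small _ h =>
        have := Finset.card_le_card (Finset.subset_union_left (s₁ := A) (s₂ := B))
        omega
      | left _ _ h _ => rw [hTl] at h; omega
      | right _ _ h _ => rw [hTu] at h; omega
    · rw [typeOf]
      simp [hTl, hTu, hA2, hB2]

theorem stmt_10 (S : Finset ℕ) :
    IsCaterpillar S ↔ ¬ ∃ T ⊆ S, ¬ IsCaterpillar T ∧ typeOf T = (2, 2) := by
  constructor
  · rintro h ⟨T, hT, hn, -⟩
    exact hn (h.subset T hT)
  · intro h
    by_contra hS
    exact h (exists_type_two_two S hS)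
end

section
/- For all integers n > 2 and k ≥ 2: if n ↛ (3)_k^2, then 2^n ↛ (5)_k^3. -/
/-- `IsTopDiff a b m`: for `a < b`, the highest binary digit in which `a` and `b` differ is the one
of weight `2 ^ m`. -/
def IsTopDiff (a b m : ℕ) : Prop :=
  a / 2 ^ m < b / 2 ^ m ∧ a / 2 ^ (m + 1) = b / 2 ^ (m + 1)

lemma exists_isTopDiff {a b : ℕ} (hab : a < b) : ∃ m, IsTopDiff a b m := by
  classical
  have hex : ∃ m, a / 2 ^ m = b / 2 ^ m :=
    ⟨b, by rw [Nat.div_eq_of_lt (hab.trans Nat.lt_two_pow_self),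
      Nat.div_eq_of_lt Nat.lt_two_pow_self]⟩
  have hspec := Nat.find_spec hex
  have hpos : Nat.find hex ≠ 0 := by
    intro h0
    rw [h0] at hspec
    simp at hspec
    omega
  obtain ⟨m, hm⟩ := Nat.exists_eq_succ_of_ne_zero hpos
  rw [hm] at hspec
  have hne : a / 2 ^ m ≠ b / 2 ^ m := Nat.find_min hex (by omega)
  exact ⟨m, lt_of_le_of_ne (Nat.div_le_div_right hab.le) hne, hspec⟩

lemma div_two_pow_eq_of_le {a b m l : ℕ} (h : a / 2 ^ m = b / 2 ^ m) (hml : m ≤ l) :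
    a / 2 ^ l = b / 2 ^ l := by
  obtain ⟨t, rfl⟩ := Nat.exists_eq_add_of_le hml
  rw [pow_add, ← Nat.div_div_eq_div_mul, ← Nat.div_div_eq_div_mul, h]

lemma IsTopDiff.unique {a b m l : ℕ} (hm : IsTopDiff a b m) (hl : IsTopDiff a b l) : m = l := by
  rcases lt_trichotomy m l with h | h | h
  · exact absurd (div_two_pow_eq_of_le hm.2 h) hl.1.ne
  · exact h
  · exact absurd (div_two_pow_eq_of_le hl.2 h) hm.1.ne

lemma IsTopDiff.lt {a b m n : ℕ} (hm : IsTopDiff a b m) (hb : b < 2 ^ n) : m < n := by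
  by_contra! h
  have h0 : b / 2 ^ m = 0 :=
    Nat.div_eq_of_lt (hb.trans_le (Nat.pow_le_pow_right (by norm_num) h))
  exact Nat.not_lt_zero _ (h0 ▸ hm.1)

/-- Otherwise `a`, `b`, `c` would have three different values of `· / 2 ^ m` with the same half. -/
lemma IsTopDiff.ne {a b c m l : ℕ} (hm : IsTopDiff a b m) (hl : IsTopDiff b c l) : m ≠ l := by
  rintro rfl
  have h1 := hm.2
  have h2 := hl.2
  rw [pow_succ, ← Nat.div_div_eq_div_mul, ← Nat.div_div_eq_div_mul] at h1 h2
  have := hm.1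
  have := hl.1
  omega

lemma IsTopDiff.trans {a b c m l : ℕ} (hab : a < b) (hbc : b < c)
    (hm : IsTopDiff a b m) (hl : IsTopDiff b c l) : IsTopDiff a c (max m l) := by
  rcases le_total m l with h | h
  · rw [max_eq_right h]
    exact ⟨(Nat.div_le_div_right hab.le).trans_lt hl.1,
      (div_two_pow_eq_of_le hm.2 (by omega)).trans hl.2⟩
  · rw [max_eq_left h]
    exact ⟨hm.1.trans_le (Nat.div_le_div_right hbc.le),
      hm.2.trans (div_two_pow_eq_of_le hl.2 (by omega))⟩

/-- The set of values of `δ` on increasing pairs from `Y`. -/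
def diffSet (δ : ℕ → ℕ → ℕ) (Y : Finset ℕ) : Finset ℕ :=
  ((Y ×ˢ Y).filter fun p => p.1 < p.2).image fun p => δ p.1 p.2

/-- A triple has only two values of `δ`, as the third is the maximum of the other two. -/
lemma diffSet_triple {δ : ℕ → ℕ → ℕ} {a b c : ℕ} (hab : a < b) (hbc : b < c)
    (hmax : δ a c = max (δ a b) (δ b c)) :
    diffSet δ {a, b, c} = {δ a b, δ b c} := by
  ext x
  simp only [diffSet, Finset.mem_image, Finset.mem_filter, Finset.mem_product, Finset.mem_insert,
    Finset.mem_singleton, Prod.exists]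
  constructor
  · rintro ⟨u, v, ⟨⟨rfl | rfl | rfl, rfl | rfl | rfl⟩, huv⟩, rfl⟩ <;> omega
  · rintro (rfl | rfl)
    · exact ⟨a, b, by simp [hab], rfl⟩
    · exact ⟨b, c, by simp [hbc], rfl⟩

/-- In a monochromatic quadruple `a < b < c < d`, the middle value `δ b c` exceeds `δ a b` and
`δ c d`. -/
lemma middle_max {n : ℕ} {κ : Type*} {f : Finset ℕ → κ} {i : κ} {δ : ℕ → ℕ → ℕ}
    (hlt : ∀ a b, a < b → b < 2 ^ n → δ a b < n)
    (hne : ∀ a b c, a < b → b < c → δ a b ≠ δ b c)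
    (hmax : ∀ a b c, a < b → b < c → δ a c = max (δ a b) (δ b c))
    (hf : ∀ x y z, x < n → y < n → z < n → x ≠ y → x ≠ z → y ≠ z →
      f {x, y} = i → f {x, z} = i → f {y, z} = i → False)
    {a b c d : ℕ} (hab : a < b) (hbc : b < c) (hcd : c < d) (hd : d < 2 ^ n)
    (h1 : f {δ a b, δ b c} = i) (h2 : f {δ a b, δ b d} = i)
    (h3 : f {δ a c, δ c d} = i) (h4 : f {δ b c, δ c d} = i) :
    δ a b < δ b c ∧ δ c d < δ b c := by
  have n1 := hne a b c hab hbc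
  have n2 := hne b c d hbc hcd
  have n3 := hne a c d (hab.trans hbc) hcd
  have n4 := hne a b d hab (hbc.trans hcd)
  have m1 := hmax a b c hab hbc
  have m2 := hmax b c d hbc hcd
  have l1 := hlt a b hab (by omega)
  have l2 := hlt b c hbc (by omega)
  have l3 := hlt c d hcd hd
  by_contra hcon
  have hcase : δ b c < δ a b ∨ δ b c < δ c d := by omega
  rcases hcase with h | h
  · have e : δ a c = δ a b := by omega
    rw [e] at h3 n3
    exact hf _ _ _ l1 l2 l3 n1 n3 n2 h1 h3 h4
  · have e : δ b d = δ c d := by omega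
    rw [e] at h2 n4
    exact hf _ _ _ l1 l2 l3 n1 n4 n2 h1 h2 h4

theorem stmt_11 (n k : ℕ) (hn : 2 < n) (hk : 2 ≤ k)
    (h : ¬ Arrows n 2 k 3) : ¬ Arrows (2 ^ n) 3 k 5 := by
  unfold Arrows at h
  push Not at h
  obtain ⟨f, hf⟩ := h
  have hδ : ∃ δ : ℕ → ℕ → ℕ, ∀ a b, a < b → IsTopDiff a b (δ a b) := by
    classical
    exact ⟨fun a b => if hab : a < b then (exists_isTopDiff hab).choose else 0,
      fun a b hab => by simpa [hab] using (exists_isTopDiff hab).choose_spec⟩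
  obtain ⟨δ, hδ⟩ := hδ
  have hlt : ∀ a b, a < b → b < 2 ^ n → δ a b < n := fun a b hab hb => (hδ a b hab).lt hb
  have hne : ∀ a b c, a < b → b < c → δ a b ≠ δ b c :=
    fun a b c hab hbc => (hδ a b hab).ne (hδ b c hbc)
  have hmax : ∀ a b c, a < b → b < c → δ a c = max (δ a b) (δ b c) :=
    fun a b c hab hbc => (hδ a c (hab.trans hbc)).unique
      ((hδ a b hab).trans hab hbc (hδ b c hbc))
  intro hA
  obtain ⟨i, X, hX, hcard, hmono⟩ := hA fun Y => f (diffSet δ Y)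
  have htri : ∀ x y z, x < n → y < n → z < n → x ≠ y → x ≠ z → y ≠ z →
      f {x, y} = i → f {x, z} = i → f {y, z} = i → False := by
    intro x y z hx hy hz hxy hxz hyz h1 h2 h3
    obtain ⟨Y, hY, hY2, hYi⟩ := hf i {x, y, z}
      (by intro t; simp only [Finset.mem_insert, Finset.mem_singleton, Finset.mem_range]; omega)
      (Finset.card_eq_three.2 ⟨x, y, z, hxy, hxz, hyz, rfl⟩)
    obtain ⟨u, v, huv, rfl⟩ := Finset.card_eq_two.1 hY2
    have hu : u ∈ ({x, y, z} : Finset ℕ) := hY (by simp)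
    have hv : v ∈ ({x, y, z} : Finset ℕ) := hY (by simp)
    simp only [Finset.mem_insert, Finset.mem_singleton] at hu hv
    rcases hu with rfl | rfl | rfl <;> rcases hv with rfl | rfl | rfl <;>
      first
        | exact huv rfl
        | exact hYi ‹_›
        | (rw [Finset.pair_comm] at hYi; exact hYi ‹_›)
  have hcol : ∀ a b c, a ∈ X → b ∈ X → c ∈ X → a < b → b < c → f {δ a b, δ b c} = i := by
    intro a b c ha hb hc hab hbc
    rw [← diffSet_triple hab hbc (hmax a b c hab hbc)]
    refine hmono _ ?_ (Finset.card_eq_three.2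
      ⟨a, b, c, hab.ne, (hab.trans hbc).ne, hbc.ne, rfl⟩)
    intro t ht
    simp only [Finset.mem_insert, Finset.mem_singleton] at ht
    rcases ht with rfl | rfl | rfl <;> assumption
  have hquad : ∀ a b c d, a ∈ X → b ∈ X → c ∈ X → d ∈ X → a < b → b < c → c < d →
      δ a b < δ b c ∧ δ c d < δ b c := by
    intro a b c d ha hb hc hd hab hbc hcd
    exact middle_max hlt hne hmax htri hab hbc hcd (Finset.mem_range.1 (hX hd))
      (hcol a b c ha hb hc hab hbc) (hcol a b d ha hb hd hab (hbc.trans hcd))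
      (hcol a c d ha hc hd (hab.trans hbc) hcd) (hcol b c d hb hc hd hbc hcd)
  let e := X.orderEmbOfFin hcard
  have hmem : ∀ j, e j ∈ X := fun j => X.orderEmbOfFin_mem hcard j
  have hlt' : ∀ j l : Fin 5, j < l → e j < e l := fun j l hjl => e.strictMono hjl
  have q1 := hquad (e 0) (e 1) (e 2) (e 3) (hmem _) (hmem _) (hmem _) (hmem _)
    (hlt' _ _ (by decide)) (hlt' _ _ (by decide)) (hlt' _ _ (by decide))
  have q2 := hquad (e 1) (e 2) (e 3) (e 4) (hmem _) (hmem _) (hmem _) (hmem _)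
    (hlt' _ _ (by decide)) (hlt' _ _ (by decide)) (hlt' _ _ (by decide))
  exact lt_asymm q1.2 q2.1
end

section
/- Let r ≥ 3 be an integer, κ > 0 a cardinal, τ > 0 an ordinal, and for each ordinal ξ < τ let λ_ξ ≥ r + 1 be a cardinal. If κ ↛ (λ_ξ)_{ξ<τ}^r, then 2^κ ↛ ((λ_ξ + 1)_{ξ<τ}, r+2, …, r+2)^{r+1}, where the colour index set is the ordinal sum τ + η(r) and each of the last η(r) colours has target cardinality r + 2; that is, there is a colouring of the (r+1)-element subsets of a set of cardinality 2^κ by ordinals < τ + η(r) such that no subset of cardinality λ_ξ + 1 is monochromatic in a colour ξ < τ, and no subset of cardinality r + 2 is monochromatic in any of the remaining η(r) colours. -/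
/-!
The colouring lives on the binary sequences indexed by a well-ordered set `K` of size `κ`, ordered
lexicographically; `e x y` is the first index where `x` and `y` differ. A finite set
`x₀ < x₁ < ... < xₙ` has the sequence `e x₀ x₁, e x₁ x₂, ...` of splitting levels. The set spans a
comb (all branching nodes on a chain) exactly if this sequence has no valley, i.e. no interior
local minimum.

An `(r + 1)`-set without valleys gets the colour given by the original colouring `f` to the set of
its `r` levels. An `(r + 1)`-set with a valley is coloured by the number `i` of its points to the
left of its first valley, `2 ≤ i ≤ r - 1`: the new colour `τ` if `i = 2`; if `i ≥ 3`, the new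
colour `τ + 1` when `i` and `r` have different parity, and the old colour `0` otherwise. For
`r = 3` only `i = 2` occurs, so one new colour is enough, and two always are.

Let `G` be an `(r + 2)`-set with first valley at position `i`. Removing a point on the right of the
valley keeps `i`, removing one on the left lowers it by one, and this is possible without
destroying the valley unless one side is as small as possible. If `i = 2`, removing the leftmost
point destroys the valley and moves the next one to a position at least 3; if `i = r`, removing the
rightmost point leaves no valley at all, while `i - 1` has the parity different from `r`. In each
case (`exists_erase_classes`) `G` contains a set of a new colour and a set of another colour. So
no `(r + 2)`-set is monochromatic in a new colour, and a set `X` of size `λ_ξ + 1 ≥ r + 2` that is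
monochromatic in an old colour `ξ` has no valley.

For such `X` the set of levels has size at least `λ_ξ` (`mk_le_levelSet`), and each `r`-element
set of levels is the set of levels of an `(r + 1)`-element subset of `X`
(`exists_finset_levels`). Hence `f` would be constantly `ξ` on a set of size `λ_ξ`, a
contradiction.
-/

universe u

/-- The negated arrow relation `κ ↛ (λ_ξ)_{ξ<τ}^r`: there is a colouring of the
`r`-element subsets of a set of cardinality `κ` by ordinals `< τ` such that for no
`ξ < τ` is there a subset of cardinality `lam ξ` all of whose `r`-element subsets
receive colour `ξ`. -/
def NotArrowsC (κ : Cardinal.{u}) (r : ℕ) (τ : Ordinal.{u})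
    (lam : Ordinal.{u} → Cardinal.{u}) : Prop :=
  ∃ f : Finset (Quotient.out κ) → Ordinal.{u},
    (∀ Y : Finset (Quotient.out κ), f Y < τ) ∧
    ¬ ∃ ξ < τ, ∃ X : Set (Quotient.out κ), Cardinal.mk X = lam ξ ∧
        ∀ Y : Finset (Quotient.out κ), ↑Y ⊆ X → Y.card = r → f Y = ξ

/-! ### Binary trees with linearly ordered branches -/

/-- A set `S` of branches of a binary tree with levels in `K`, in left-to-right order: `e x y` is
the level at which `x` and `y` split, with `e x x = ⊤`. Field `trans` is the ultrametric law,
`binary` says that a node has only two children, and `order` that the order on `S` is compatible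
with the tree (the two splittings of three consecutive branches cannot happen at one level). -/
structure TreeDist (S : Type*) (K : Type*) [LinearOrder S] [LinearOrder K] where
  e : S → S → WithTop K
  symm : ∀ x y, e x y = e y x
  eq_top : ∀ x y, e x y = ⊤ ↔ x = y
  trans : ∀ x y z, e x y < e y z → e x z = e x y
  binary : ∀ x y z, e x y = e y z → e x y ≠ ⊤ → e x y < e x z
  order : ∀ x y z, x < y → y < z → e x y ≠ e y z

namespace TreeDist

/-! ### Valleys and the position of the first one -/

section valley
variable {S K : Type*} [LinearOrder S] [LinearOrder K] (t : TreeDist S K)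

theorem lt_top_of_ne {x y : S} (h : x ≠ y) : t.e x y < ⊤ :=
  lt_top_iff_ne_top.2 fun h' => h ((t.eq_top _ _).1 h')

theorem ne_of_lt {x y : S} {c : WithTop K} (h : t.e x y < c) : x ≠ y := by
  rintro rfl
  rw [(t.eq_top x x).2 rfl] at h
  exact not_top_lt h

theorem le_of_between {x y z : S} (hxy : x < y) (hyz : y < z) :
    t.e x z ≤ t.e x y ∧ t.e x z ≤ t.e y z := by
  rcases lt_or_gt_of_ne (t.order x y z hxy hyz) with h | h
  · rw [t.trans x y z h]; exact ⟨le_rfl, h.le⟩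
  · have : t.e x z = t.e y z := by
      rw [t.symm x z, t.symm y z]
      apply t.trans
      rwa [t.symm z y, t.symm y x]
    rw [this]; exact ⟨h.le, le_rfl⟩

/-- `z ∈ Y` is the right end of a valley of the sequence of splitting levels of `Y`. The points
`a, y, b` need not be neighbours, which makes the notion monotone in `Y`; the least such `z` is
nevertheless the right end of the leftmost valley of the sequence formed by neighbours. -/
def IsValley (Y : Finset S) (z : S) : Prop :=
  z ∈ Y ∧ ∃ a ∈ Y, ∃ y ∈ Y, ∃ b ∈ Y, a < y ∧ y < z ∧ z < b ∧
    t.e y z < t.e a y ∧ t.e y z < t.e z b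

/-- `Y` has a valley, that is, it does not span a comb: some node of the tree spanned by `Y` has
branchings above both of its children. -/
def HasValley (Y : Finset S) : Prop := ∃ z, t.IsValley Y z

/-- The number of points of `Y` to the left of its first valley (`0` if there is none). -/
noncomputable def pos (Y : Finset S) : ℕ :=
  sInf {n | ∃ z, t.IsValley Y z ∧ (Y.filter (· < z)).card = n}

variable {t}

theorem IsValley.mono {Y Y' : Finset S} {z : S} (h : t.IsValley Y z) (hs : Y ⊆ Y') :
    t.IsValley Y' z := by
  obtain ⟨hz, a, ha, y, hy, b, hb, h⟩ := h
  exact ⟨hs hz, a, hs ha, y, hs hy, b, hs hb, h⟩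

theorem HasValley.mono {Y Y' : Finset S} (h : t.HasValley Y) (hs : Y ⊆ Y') : t.HasValley Y' :=
  ⟨_, h.choose_spec.mono hs⟩

theorem pos_eq {Y : Finset S} {z : S} (hz : t.IsValley Y z)
    (hmin : ∀ z', t.IsValley Y z' → z ≤ z') : t.pos Y = (Y.filter (· < z)).card := by
  apply le_antisymm
  · exact Nat.sInf_le ⟨z, hz, rfl⟩
  · obtain ⟨z', hz', h⟩ := Nat.sInf_mem (s := {n | ∃ z, t.IsValley Y z ∧ (Y.filter (· < z)).card = n})
      ⟨_, z, hz, rfl⟩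
    rw [pos, ← h]
    apply Finset.card_le_card
    intro x hx
    simp only [Finset.mem_filter] at hx ⊢
    exact ⟨hx.1, hx.2.trans_le (hmin z' hz')⟩

theorem HasValley.exists_first {Y : Finset S} (h : t.HasValley Y) :
    ∃ z, t.IsValley Y z ∧ ∀ z', t.IsValley Y z' → z ≤ z' := by
  classical
  obtain ⟨z, hz⟩ := h
  obtain ⟨m, hm, hmin⟩ := Finset.exists_min_image (Y.filter (t.IsValley Y)) id
    ⟨z, by simp [hz, hz.1]⟩
  simp only [Finset.mem_filter, id] at hm hmin
  exact ⟨m, hm.2, fun z' hz' => hmin z' ⟨hz'.1, hz'⟩⟩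

theorem card_split {Y : Finset S} {z : S} (hz : z ∈ Y) :
    (Y.filter (· < z)).card + (Y.filter (z < ·)).card + 1 = Y.card := by
  classical
  have h1 := Finset.card_filter_add_card_filter_not (s := Y) (p := (· < z))
  have h2 : Y.filter (fun x => ¬ x < z) = insert z (Y.filter (z < ·)) := by
    ext x
    simp only [Finset.mem_filter, Finset.mem_insert, not_lt]
    constructor
    · rintro ⟨hx, h⟩
      rcases h.eq_or_lt with h | h
      · exact Or.inl h.symm
      · exact Or.inr ⟨hx, h⟩
    · rintro (rfl | h)
      · exact ⟨hz, le_rfl⟩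
      · exact ⟨h.1, h.2.le⟩
  rw [h2, Finset.card_insert_of_notMem (by simp)] at h1
  omega

theorem pos_erase [DecidableEq S] {G : Finset S} {z w : S}
    (hmin : ∀ z', t.IsValley G z' → z ≤ z') (hz : t.IsValley (G.erase w) z) :
    t.pos (G.erase w) = ((G.erase w).filter (· < z)).card :=
  pos_eq hz fun z' h => hmin z' (h.mono (Finset.erase_subset _ _))

/-- A point to the right of the first valley can be removed without affecting its position. -/
theorem exists_erase_right [DecidableEq S] {G : Finset S} {z : S} (hz : t.IsValley G z)
    (hmin : ∀ z', t.IsValley G z' → z ≤ z') (h2 : 2 ≤ (G.filter (z < ·)).card) :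
    ∃ w ∈ G, t.HasValley (G.erase w) ∧ t.pos (G.erase w) = (G.filter (· < z)).card := by
  obtain ⟨hzG, a, ha, y, hy, b, hb, hay, hyz, hzb, h⟩ := hz
  obtain ⟨w, hw, hwb⟩ := Finset.exists_mem_ne h2 b
  simp only [Finset.mem_filter] at hw
  have hv : t.IsValley (G.erase w) z := by
    refine ⟨?_, a, ?_, y, ?_, b, ?_, hay, hyz, hzb, h⟩ <;> rw [Finset.mem_erase]
    · exact ⟨hw.2.ne, hzG⟩
    · exact ⟨((hay.trans hyz).trans hw.2).ne, ha⟩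
    · exact ⟨(hyz.trans hw.2).ne, hy⟩
    · exact ⟨hwb.symm, hb⟩
  refine ⟨w, hw.1, ⟨z, hv⟩, ?_⟩
  rw [pos_erase hmin hv, Finset.filter_erase, Finset.erase_eq_of_notMem]
  simp [hw.2.le]

/-- A point to the left of the first valley can be removed so that the position drops by one. -/
theorem exists_erase_left [DecidableEq S] {G : Finset S} {z : S} (hz : t.IsValley G z)
    (hmin : ∀ z', t.IsValley G z' → z ≤ z') (h2 : 3 ≤ (G.filter (· < z)).card) :
    ∃ w ∈ G, t.HasValley (G.erase w) ∧ t.pos (G.erase w) + 1 = (G.filter (· < z)).card := by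
  obtain ⟨hzG, a, ha, y, hy, b, hb, hay, hyz, hzb, h⟩ := hz
  obtain ⟨w, hw, hw'⟩ := Finset.exists_mem_notMem_of_card_lt_card
    (s := {a, y}) (t := G.filter (· < z)) (by
      have : ({a, y} : Finset S).card ≤ 2 := Finset.card_le_two
      omega)
  simp only [Finset.mem_filter] at hw
  simp only [Finset.mem_insert, Finset.mem_singleton, not_or] at hw'
  have hv : t.IsValley (G.erase w) z := by
    refine ⟨?_, a, ?_, y, ?_, b, ?_, hay, hyz, hzb, h⟩ <;> rw [Finset.mem_erase]
    · exact ⟨hw.2.ne', hzG⟩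
    · exact ⟨Ne.symm hw'.1, ha⟩
    · exact ⟨Ne.symm hw'.2, hy⟩
    · exact ⟨(hw.2.trans hzb).ne', hb⟩
  refine ⟨w, hw.1, ⟨z, hv⟩, ?_⟩
  rw [pos_erase hmin hv, Finset.filter_erase]
  exact Finset.card_erase_add_one (by simp [hw])

theorem two_le_left {G : Finset S} {z : S} (hz : t.IsValley G z) :
    2 ≤ (G.filter (· < z)).card := by
  classical
  obtain ⟨hzG, a, ha, y, hy, b, hb, hay, hyz, hzb, h⟩ := hz
  rw [← Finset.card_pair hay.ne]
  apply Finset.card_le_card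
  intro x
  simp only [Finset.mem_insert, Finset.mem_singleton, Finset.mem_filter]
  rintro (rfl | rfl)
  · exact ⟨ha, hay.trans hyz⟩
  · exact ⟨hy, hyz⟩

/-- If only one point lies to the right of the first valley, removing it leaves no valley. -/
theorem exists_erase_comb [DecidableEq S] {G : Finset S} {z : S} (hz : t.IsValley G z)
    (hmin : ∀ z', t.IsValley G z' → z ≤ z') (h2 : (G.filter (z < ·)).card ≤ 1) :
    ∃ w ∈ G, ¬ t.HasValley (G.erase w) := by
  obtain ⟨hzG, a, ha, y, hy, b, hb, hay, hyz, hzb, h⟩ := hz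
  refine ⟨b, hb, ?_⟩
  rintro ⟨z', hz'⟩
  have hle := hmin z' (hz'.mono (Finset.erase_subset _ _))
  obtain ⟨_, _, _, _, _, b', hb', _, _, hzb', _⟩ := hz'
  rw [Finset.mem_erase] at hb'
  exact hb'.1 (Finset.card_le_one.1 h2 b' (by simp [hb', hle.trans_lt hzb']) b (by simp [hb, hzb]))

/-- If the first valley is at position 2, removing the leftmost point destroys it, and the next
valley, if any, cannot be at position 2 of the remaining set. -/
theorem exists_erase_pos_ne_two [DecidableEq S] {G : Finset S} {z : S} (hz : t.IsValley G z)
    (hmin : ∀ z', t.IsValley G z' → z ≤ z') (h2 : (G.filter (· < z)).card = 2) :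
    ∃ w ∈ G, t.HasValley (G.erase w) → t.pos (G.erase w) ≠ 2 := by
  obtain ⟨hzG, a, ha, y, hy, b, hb, hay, hyz, hzb, h1, h3⟩ := hz
  have hL : ∀ x ∈ G, x < z → x = a ∨ x = y := by
    intro x hx hxz
    have : ({a, y} : Finset S) = G.filter (· < z) := by
      apply Finset.eq_of_subset_of_card_le
      · intro x
        simp only [Finset.mem_insert, Finset.mem_singleton, Finset.mem_filter]
        rintro (rfl | rfl)
        · exact ⟨ha, hay.trans hyz⟩
        · exact ⟨hy, hyz⟩
      · rw [h2, Finset.card_pair hay.ne]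
    have hx' : x ∈ G.filter (· < z) := by simp [hx, hxz]
    rw [← this] at hx'
    simpa using hx'
  refine ⟨a, ha, fun hv hpos => ?_⟩
  obtain ⟨z', hz', hmin'⟩ := hv.exists_first
  rw [pos_eq hz' hmin'] at hpos
  have hle := hmin z' (hz'.mono (Finset.erase_subset _ _))
  have hne : z ≠ z' := by
    rintro rfl
    have : (G.erase a).filter (· < z) ⊆ {y} := by
      intro x
      simp only [Finset.mem_filter, Finset.mem_erase, Finset.mem_singleton]
      rintro ⟨⟨hxa, hx⟩, hxz⟩
      exact (hL x hx hxz).resolve_left hxa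
    have := Finset.card_le_card this
    rw [hpos, Finset.card_singleton] at this
    omega
  have hlt : z < z' := lt_of_le_of_ne hle hne
  -- exactly `y` and `z` lie below `z'`
  have hset : ({y, z} : Finset S) = (G.erase a).filter (· < z') := by
    apply Finset.eq_of_subset_of_card_le
    · intro x
      simp only [Finset.mem_insert, Finset.mem_singleton, Finset.mem_filter, Finset.mem_erase]
      rintro (rfl | rfl)
      · exact ⟨⟨hay.ne', hy⟩, hyz.trans hlt⟩
      · exact ⟨⟨(hay.trans hyz).ne', hzG⟩, hlt⟩
    · rw [hpos, Finset.card_pair hyz.ne]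
  obtain ⟨hz'G, a', ha', y', hy', b', hb', hay', hyz', hzb', h1', h3'⟩ := hz'
  have ha'' : a' ∈ (G.erase a).filter (· < z') := by
    rw [Finset.mem_filter]; exact ⟨ha', hay'.trans hyz'⟩
  have hy'' : y' ∈ (G.erase a).filter (· < z') := by
    rw [Finset.mem_filter]; exact ⟨hy', hyz'⟩
  rw [← hset] at ha'' hy''
  simp only [Finset.mem_insert, Finset.mem_singleton] at ha'' hy''
  have : a' = y ∧ y' = z := by
    rcases ha'' with rfl | rfl <;> rcases hy'' with rfl | rfl
    · exact absurd hay' (lt_irrefl _)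
    · exact ⟨rfl, rfl⟩
    · exact absurd hay' hyz.not_gt
    · exact absurd hay' (lt_irrefl _)
  obtain ⟨rfl, rfl⟩ := this
  -- `b` is at or beyond `z'`
  have hb' : z' ≤ b := by
    by_contra hcon
    have : b ∈ (G.erase a).filter (· < z') := by
      rw [Finset.mem_filter, Finset.mem_erase]
      exact ⟨⟨((hay.trans hyz).trans hzb).ne', hb⟩, not_le.1 hcon⟩
    rw [← hset] at this
    simp only [Finset.mem_insert, Finset.mem_singleton] at this
    rcases this with rfl | rfl
    · exact absurd hzb hyz.not_gt
    · exact absurd hzb (lt_irrefl _)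
  rcases hb'.eq_or_lt with rfl | hlt'
  · exact absurd h3 h1'.not_gt
  · exact absurd (h3.trans_le (t.le_of_between hlt hlt').1) h1'.not_gt

/-- In terms of the three classes "position 2", "position at least 3, parity different from `r`"
and "position at least 3, parity of `r`" of sets with a valley: an `(r + 2)`-set `G` with a valley
has a subset `G \ {w}` in one of the first two classes and a subset `G \ {w'}` not in the
same class. -/
theorem exists_erase_classes [DecidableEq S] {r : ℕ} (hr : 3 ≤ r) {G : Finset S} (hG : G.card = r + 2)
    (hv : t.HasValley G) : ∃ w ∈ G, ∃ w' ∈ G, t.HasValley (G.erase w) ∧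
      ((t.pos (G.erase w) = 2 ∧ (t.HasValley (G.erase w') → t.pos (G.erase w') ≠ 2)) ∨
      (r ≠ 3 ∧ t.pos (G.erase w) ≠ 2 ∧ t.pos (G.erase w) % 2 ≠ r % 2 ∧
        (t.HasValley (G.erase w') → t.pos (G.erase w') % 2 = r % 2))) := by
  obtain ⟨z, hz, hmin⟩ := hv.exists_first
  have h2 := two_le_left hz
  have hc := card_split hz.1
  by_cases hi2 : (G.filter (· < z)).card = 2
  · obtain ⟨w, hw, hwv, hwp⟩ := exists_erase_right hz hmin (by omega)
    obtain ⟨w', hw', h'⟩ := exists_erase_pos_ne_two hz hmin hi2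
    exact ⟨w, hw, w', hw', hwv, Or.inl ⟨by omega, h'⟩⟩
  obtain ⟨w, hw, hwv, hwp⟩ := exists_erase_left hz hmin (by omega)
  by_cases h1 : (G.filter (z < ·)).card ≤ 1
  · have hb1 : 1 ≤ (G.filter (z < ·)).card := by
      obtain ⟨hzG, a, ha, y, hy, b, hb, hay, hyz, hzb, h⟩ := hz
      exact Finset.card_pos.2 ⟨b, by simp [hb, hzb]⟩
    obtain ⟨w', hw', h'⟩ := exists_erase_comb hz hmin h1
    refine ⟨w, hw, w', hw', hwv, ?_⟩
    by_cases h3 : r = 3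
    · exact Or.inl ⟨by omega, fun h => absurd h h'⟩
    · exact Or.inr ⟨h3, by omega, by omega, fun h => absurd h h'⟩
  obtain ⟨w', hw', hwv', hwp'⟩ := exists_erase_right hz hmin (by omega)
  by_cases hi3 : (G.filter (· < z)).card = 3
  · exact ⟨w, hw, w', hw', hwv, Or.inl ⟨by omega, fun _ => by omega⟩⟩
  by_cases hpar : (G.filter (· < z)).card % 2 = r % 2
  · exact ⟨w, hw, w', hw', hwv, Or.inr ⟨by omega, by omega, by omega, fun _ => by omega⟩⟩
  · exact ⟨w', hw', w, hw, hwv', Or.inr ⟨by omega, by omega, by omega, fun _ => by omega⟩⟩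

/-! ### Sets without valleys -/

theorem exists_valley_of_lt {X : Set S} {p q s v : S} (hp : p ∈ X) (hq : q ∈ X) (hs : s ∈ X)
    (hv : v ∈ X) (hpq : p < q) (hsv : s < v) (hps : p < s)
    (h1 : t.e p s < t.e p q) (h2 : t.e p s < t.e s v) :
    ∃ Y : Finset S, ↑Y ⊆ X ∧ t.HasValley Y := by
  classical
  have hqs : q < s := by
    rcases lt_trichotomy q s with h | rfl | h
    · exact h
    · exact absurd h1 (lt_irrefl _)
    · exact absurd (t.le_of_between hps h).1 h1.not_ge
  have h3 : t.e q s = t.e p s := by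
    rw [t.symm q s, t.symm p s]
    exact t.trans s p q (by rwa [t.symm s p])
  refine ⟨{p, q, s, v}, ?_, s, by simp, p, by simp, q, by simp, v, by simp, hpq, hqs, hsv, ?_, ?_⟩
  · intro x hx
    simp only [Finset.coe_insert, Finset.coe_singleton, Set.mem_insert_iff,
      Set.mem_singleton_iff] at hx
    rcases hx with rfl | rfl | rfl | rfl <;> assumption
  · rwa [h3]
  · rwa [h3]

/-- Order-free description of valleys: two pairs that split above the level at which they
separate from each other. -/
theorem exists_valley {X : Set S} {p q s v : S} (hp : p ∈ X) (hq : q ∈ X) (hs : s ∈ X)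
    (hv : v ∈ X) (hpq : p ≠ q) (hsv : s ≠ v)
    (h1 : t.e p s < t.e p q) (h2 : t.e p s < t.e s v) :
    ∃ Y : Finset S, ↑Y ⊆ X ∧ t.HasValley Y := by
  wlog hps : p < s generalizing p q s v
  · have hne : p ≠ s := t.ne_of_lt h1
    refine this hs hv hp hq hsv hpq ?_ ?_ (lt_of_le_of_ne (not_lt.1 hps) hne.symm)
    · rwa [t.symm s p]
    · rwa [t.symm s p]
  -- order each of the two pairs increasingly; the meet of the pairs does not change
  wlog hpq' : p < q generalizing p q
  · have hqs : t.e q s = t.e p s := by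
      rw [t.symm q s, t.symm p s]
      exact t.trans s p q (by rwa [t.symm s p])
    have hlt : q < p := lt_of_le_of_ne (not_lt.1 hpq') hpq.symm
    exact this hq hp hpq.symm (by rwa [hqs, t.symm q p]) (by rwa [hqs]) (hlt.trans hps) hlt
  wlog hsv' : s < v generalizing s v
  · have hpv : t.e p v = t.e p s := t.trans p s v h2
    have hlt : v < s := lt_of_le_of_ne (not_lt.1 hsv') hsv.symm
    refine this hv hs hsv.symm (by rwa [hpv]) (by rwa [hpv, t.symm v s]) ?_ hlt
    rcases lt_trichotomy p v with h | rfl | h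
    · exact h
    · rw [t.symm s p] at h2
      exact absurd h2 (lt_irrefl _)
    · exfalso
      have := (t.le_of_between h hps).1
      rw [t.symm v s] at this
      exact absurd (h2.trans_le this) (by rw [t.symm p v] at hpv; simp [← hpv])
  exact exists_valley_of_lt hp hq hs hv hpq' hsv' hps h1 h2

variable (t) in
/-- The finite set of all levels at which two points of `Y` split. The value used by `untopD` is
irrelevant, since only pairs of distinct points are considered. -/
noncomputable def levels [DecidableEq K] [Nonempty K] (Y : Finset S) : Finset K :=
  Y.offDiag.image fun p => (t.e p.1 p.2).untopD (Classical.arbitrary K)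

theorem mem_levels [DecidableEq K] [Nonempty K] {Y : Finset S} {k : K} :
    k ∈ t.levels Y ↔ ∃ x ∈ Y, ∃ y ∈ Y, t.e x y = k := by
  simp only [levels, Finset.mem_image, Finset.mem_offDiag, Prod.exists]
  constructor
  · rintro ⟨x, y, ⟨hx, hy, hxy⟩, rfl⟩
    obtain ⟨j, hj⟩ := WithTop.ne_top_iff_exists.1 (t.lt_top_of_ne hxy).ne
    exact ⟨x, hx, y, hy, by rw [← hj, WithTop.untopD_coe]⟩
  · rintro ⟨x, hx, y, hy, h⟩
    refine ⟨x, y, ⟨hx, hy, ?_⟩, by simp [h]⟩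
    rintro rfl
    rw [(t.eq_top x x).2 rfl] at h
    exact WithTop.coe_ne_top h.symm

variable (t) in
/-- The set of all levels at which two points of the possibly infinite set `X` split. -/
def levelSet (X : Set S) : Set K := {k | ∃ x ∈ X, ∃ y ∈ X, t.e x y = k}

/-- In a set without valleys the branching nodes form a chain, so every nonempty finite set of
its levels is exactly the set of levels of a finite subset with one more point. The points are
found from the top level downwards: below the points already chosen, a pair splitting at the next
level has a member that leaves their common branch exactly there. -/
theorem exists_finset_levels [DecidableEq K] [Nonempty K] {X : Set S}
    (hX : ∀ Y : Finset S, ↑Y ⊆ X → ¬ t.HasValley Y) (T : Finset K) (hT : T.Nonempty)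
    (hTX : ↑T ⊆ t.levelSet X) :
    ∃ Y : Finset S, ↑Y ⊆ X ∧ Y.card = T.card + 1 ∧ t.levels Y = T := by
  classical
  induction T using Finset.induction_on_min with
  | empty => simp at hT
  | insert k T hk ih =>
    obtain ⟨x, hx, y, hy, hxy⟩ : k ∈ t.levelSet X := hTX (by simp)
    have hxyne : x ≠ y := by
      rintro rfl
      rw [(t.eq_top x x).2 rfl] at hxy
      exact WithTop.coe_ne_top hxy.symm
    rcases T.eq_empty_or_nonempty with rfl | hT'
    · refine ⟨{x, y}, ?_, ?_, ?_⟩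
      · intro w hw
        simp only [Finset.coe_insert, Finset.coe_singleton, Set.mem_insert_iff,
          Set.mem_singleton_iff] at hw
        rcases hw with rfl | rfl <;> assumption
      · simp [Finset.card_pair hxyne]
      · ext j
        rw [mem_levels]
        simp only [Finset.mem_insert, Finset.mem_singleton, Finset.notMem_empty, or_false]
        constructor
        · rintro ⟨a, rfl | rfl, b, rfl | rfl, h⟩
          · rw [(t.eq_top _ _).2 rfl] at h; exact absurd h.symm WithTop.coe_ne_top
          · rw [hxy] at h; exact (WithTop.coe_injective h).symm
          · rw [t.symm, hxy] at h; exact (WithTop.coe_injective h).symm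
          · rw [(t.eq_top _ _).2 rfl] at h; exact absurd h.symm WithTop.coe_ne_top
        · rintro rfl
          exact ⟨x, Or.inl rfl, y, Or.inr rfl, hxy⟩
    obtain ⟨Y, hYX, hYc, hYT⟩ := ih hT' (fun j hj => hTX (by simp [Finset.mem_coe.1 hj]))
    have hlev : ∀ a ∈ Y, ∀ b ∈ Y, (k : WithTop K) < t.e a b := by
      intro a ha b hb
      rcases eq_or_ne (t.e a b) ⊤ with h | h
      · rw [h]; exact WithTop.coe_lt_top k
      · obtain ⟨j, hj⟩ := WithTop.ne_top_iff_exists.1 h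
        have : j ∈ T := by rw [← hYT, mem_levels]; exact ⟨a, ha, b, hb, hj.symm⟩
        rw [← hj]
        exact WithTop.coe_lt_coe.2 (hk j this)
    obtain ⟨w, hw, w', hw', hww⟩ := Finset.one_lt_card.1 (show 1 < Y.card by
      have := Finset.card_pos.2 hT'
      omega)
    obtain ⟨z, hz, hzw⟩ : ∃ z ∈ X, t.e z w = k := by
      rcases lt_trichotomy (t.e x w) k with h | h | h
      · exfalso
        obtain ⟨V, hV, hV'⟩ := exists_valley (t := t) hx hy (hYX hw) (hYX hw') hxyne hww
          (by rwa [hxy]) (h.trans (hlev w hw w' hw'))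
        exact hX V hV hV'
      · exact ⟨x, hx, h⟩
      · refine ⟨y, hy, ?_⟩
        rw [t.trans y x w (by rwa [t.symm y x, hxy]), t.symm, hxy]
    have hzY : ∀ a ∈ Y, t.e z a = k := by
      intro a ha
      rw [t.trans z w a (by rw [hzw]; exact hlev w hw a ha), hzw]
    have hznot : z ∉ Y := by
      intro h
      have := hlev z h z h
      rw [hzY z h] at this
      exact lt_irrefl _ this
    refine ⟨insert z Y, ?_, ?_, ?_⟩
    · rw [Finset.coe_insert]
      exact Set.insert_subset hz hYX
    · rw [Finset.card_insert_of_notMem hznot, hYc,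
        Finset.card_insert_of_notMem fun h => lt_irrefl _ (hk k h)]
    · ext j
      rw [mem_levels, Finset.mem_insert, ← hYT, mem_levels]
      constructor
      · rintro ⟨a, ha, b, hb, h⟩
        rcases Finset.mem_insert.1 ha with rfl | ha' <;>
          rcases Finset.mem_insert.1 hb with rfl | hb'
        · rw [(t.eq_top _ _).2 rfl] at h; exact absurd h.symm WithTop.coe_ne_top
        · rw [hzY b hb'] at h; exact Or.inl (WithTop.coe_injective h).symm
        · rw [t.symm, hzY a ha'] at h; exact Or.inl (WithTop.coe_injective h).symm
        · exact Or.inr ⟨a, ha', b, hb', h⟩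
      · rintro (rfl | ⟨a, ha, b, hb, h⟩)
        · exact ⟨z, by simp, w, by simp [hw], hzw⟩
        · exact ⟨a, by simp [ha], b, by simp [hb], h⟩

end valley

section card
variable {S K : Type u} [LinearOrder S] [LinearOrder K] {t : TreeDist S K}

/-- A set without valleys has at most one more point than it has levels. Either some `x₀` is such
that `x ↦ e x x₀` is injective on the other points, or every `x` splits from two different points
`p x`, `q x` at one level; that level is then the highest at which `x` splits from anything, and it
determines `x`. -/
theorem mk_le_levelSet {X : Set S} (hX : ∀ Y : Finset S, ↑Y ⊆ X → ¬ t.HasValley Y) :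
    Cardinal.mk X ≤ Cardinal.mk (t.levelSet X) + 1 := by
  classical
  have hval : ∀ {p q s v : S}, p ∈ X → q ∈ X → s ∈ X → v ∈ X → p ≠ q → s ≠ v →
      t.e p s < t.e p q → t.e p s < t.e s v → False := by
    intro p q s v hp hq hs hv hpq hsv h1 h2
    obtain ⟨V, hV, hV'⟩ := exists_valley hp hq hs hv hpq hsv h1 h2
    exact hX V hV hV'
  have hlift : ∀ x ∈ X, ∀ y ∈ X, x ≠ y → ∃ k : t.levelSet X, (k.1 : WithTop K) = t.e x y := by
    intro x hx y hy hxy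
    obtain ⟨j, hj⟩ := WithTop.ne_top_iff_exists.1 (t.lt_top_of_ne hxy).ne
    exact ⟨⟨j, x, hx, y, hy, hj.symm⟩, hj⟩
  by_cases hQ : ∃ x₀ ∈ X, ∀ x ∈ X, ∀ y ∈ X, x ≠ x₀ → y ≠ x₀ → t.e x x₀ = t.e y x₀ → x = y
  · obtain ⟨x₀, hx₀, hinj⟩ := hQ
    choose g hg using fun (x : X) (h : x.1 ≠ x₀) => hlift x x.2 x₀ hx₀ h
    rw [← Cardinal.mk_option]
    refine Cardinal.mk_le_of_injective
      (f := fun x : X => if h : x.1 = x₀ then none else some (g x h)) ?_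
    intro x y hxy
    by_cases h1 : x.1 = x₀ <;> by_cases h2 : y.1 = x₀
    · exact Subtype.ext (h1.trans h2.symm)
    · simp [h1, h2] at hxy
    · simp [h1, h2] at hxy
    · simp only [h1, h2, dite_false, Option.some.injEq] at hxy
      apply Subtype.ext
      apply hinj x x.2 y y.2 h1 h2
      rw [← hg x h1, ← hg y h2, hxy]
  · push Not at hQ
    choose! p hp q hq hpx hqx hpq hne using hQ
    have hmax : ∀ x ∈ X, ∀ y ∈ X, y ≠ x → t.e x y ≤ t.e (p x) x := by
      intro x hx y hy hyx
      by_contra hcon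
      refine hval hx hy (hp x hx) (hq x hx) hyx.symm (hne x hx) ?_ ?_
      · rw [t.symm x]; exact not_le.1 hcon
      · rw [t.symm x]
        exact t.binary (p x) x (q x) (by rw [hpq x hx, t.symm]) (t.lt_top_of_ne (hpx x hx)).ne
    choose g hg using fun (x : X) => hlift (p x) (hp x x.2) x x.2 (hpx x x.2)
    refine (Cardinal.mk_le_of_injective (f := g) ?_).trans (self_le_add_right _ _)
    intro x y hxy
    by_contra hxyne
    have hxy' : x.1 ≠ y.1 := fun h => hxyne (Subtype.ext h)
    have heq : t.e (p x) x = t.e (p y) y := by rw [← hg, ← hg, hxy]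
    rcases (hmax x x.2 y y.2 hxy'.symm).lt_or_eq with hlt | hE
    · refine hval x.2 (hp x x.2) y.2 (hp y y.2) (hpx x x.2).symm (hpx y y.2).symm ?_ ?_
      · rwa [t.symm x (p x)]
      · rwa [t.symm y (p y), ← heq]
    · obtain ⟨v, hv, hvy, hvx⟩ : ∃ v ∈ X, v ≠ y.1 ∧ t.e v x = t.e (p x) x := by
        by_cases h : p x = y.1
        · exact ⟨q x, hq x x.2, fun h' => hne x x.2 (h.trans h'.symm), (hpq x x.2).symm⟩
        · exact ⟨p x, hp x x.2, h, rfl⟩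
      have h1 := hmax y y.2 v hv hvy
      have h2 := t.binary y x v (by rw [t.symm y x, hE, t.symm x v, hvx])
        (t.lt_top_of_ne hxy'.symm).ne
      rw [t.symm y x, hE, heq] at h2
      exact absurd h1 h2.not_ge

end card
end TreeDist

/-! ### The tree of binary sequences -/

section lex
variable {K : Type u} [LinearOrder K] [WellFoundedLT K]

open Classical in
/-- The first index at which `x` and `y` differ, and `⊤` if `x = y`. -/
noncomputable def firstDiff (x y : Lex (K → Bool)) : WithTop K :=
  if h : ∃ i, ofLex x i ≠ ofLex y i then
    ((wellFounded_lt.min {i | ofLex x i ≠ ofLex y i} h : K) : WithTop K) else ⊤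

theorem firstDiff_eq_coe {x y : Lex (K → Bool)} {k : K} :
    firstDiff x y = k ↔ (∀ j < k, ofLex x j = ofLex y j) ∧ ofLex x k ≠ ofLex y k := by
  unfold firstDiff
  split_ifs with h
  · rw [WithTop.coe_inj]
    constructor
    · rintro rfl
      refine ⟨fun j hj => ?_, wellFounded_lt.min_mem {i | ofLex x i ≠ ofLex y i} h⟩
      by_contra hcon
      exact wellFounded_lt.not_lt_min {i | ofLex x i ≠ ofLex y i} hcon hj
    · rintro ⟨h1, h2⟩
      apply le_antisymm
      · exact not_lt.1 (wellFounded_lt.not_lt_min {i | ofLex x i ≠ ofLex y i} h2)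
      · by_contra hcon
        exact wellFounded_lt.min_mem {i | ofLex x i ≠ ofLex y i} h (h1 _ (not_le.1 hcon))
  · push Not at h
    simp [h]

theorem firstDiff_eq_top {x y : Lex (K → Bool)} : firstDiff x y = ⊤ ↔ x = y := by
  unfold firstDiff
  split_ifs with h
  · simp only [WithTop.coe_ne_top, false_iff]
    rintro rfl
    simp at h
  · push Not at h
    simp only [true_iff]
    exact ofLex.injective (funext h)

theorem eq_of_lt_firstDiff {x y : Lex (K → Bool)} {j : K} (h : (j : WithTop K) < firstDiff x y) :
    ofLex x j = ofLex y j := by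
  rcases eq_or_ne (firstDiff x y) ⊤ with h' | h'
  · rw [firstDiff_eq_top.1 h']
  · obtain ⟨k, hk⟩ := WithTop.ne_top_iff_exists.1 h'
    rw [← hk, WithTop.coe_lt_coe] at h
    exact (firstDiff_eq_coe.1 hk.symm).1 j h

theorem firstDiff_of_lt {x y : Lex (K → Bool)} (h : x < y) :
    ∃ k : K, firstDiff x y = k ∧ ofLex x k < ofLex y k := by
  obtain ⟨k, hk, hlt⟩ := h
  exact ⟨k, firstDiff_eq_coe.2 ⟨hk, hlt.ne⟩, hlt⟩

variable (K) in
/-- The binary sequences indexed by a well-order, in lexicographic order, split at their first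
difference. -/
noncomputable def lexTree : TreeDist (Lex (K → Bool)) K where
  e := firstDiff
  symm x y := by
    rcases eq_or_ne (firstDiff x y) ⊤ with h | h
    · rw [firstDiff_eq_top.1 h]
    · obtain ⟨k, hk⟩ := WithTop.ne_top_iff_exists.1 h
      have := firstDiff_eq_coe.1 hk.symm
      rw [← hk, eq_comm, firstDiff_eq_coe]
      exact ⟨fun j hj => (this.1 j hj).symm, this.2.symm⟩
  eq_top _ _ := firstDiff_eq_top
  trans x y z h := by
    obtain ⟨k, hk⟩ := WithTop.ne_top_iff_exists.1 h.ne_top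
    have h1 := firstDiff_eq_coe.1 hk.symm
    rw [← hk] at h ⊢
    rw [firstDiff_eq_coe]
    refine ⟨fun j hj => ?_, ?_⟩
    · rw [h1.1 j hj]
      exact eq_of_lt_firstDiff ((WithTop.coe_lt_coe.2 hj).trans h)
    · rw [← eq_of_lt_firstDiff h]
      exact h1.2
  binary x y z h hne := by
    obtain ⟨k, hk⟩ := WithTop.ne_top_iff_exists.1 hne
    have h1 := firstDiff_eq_coe.1 hk.symm
    have h2 := firstDiff_eq_coe.1 (hk.trans h).symm
    rw [← hk]
    rcases eq_or_ne (firstDiff x z) ⊤ with h' | h'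
    · rw [h']; exact WithTop.coe_lt_top k
    · obtain ⟨m, hm⟩ := WithTop.ne_top_iff_exists.1 h'
      have h3 := firstDiff_eq_coe.1 hm.symm
      rw [← hm, WithTop.coe_lt_coe]
      by_contra hcon
      rcases (not_lt.1 hcon).lt_or_eq with h4 | rfl
      · exact h3.2 ((h1.1 m h4).trans (h2.1 m h4))
      · have a := h1.2
        have b := h2.2
        have c := h3.2
        revert a b c
        cases ofLex x m <;> cases ofLex y m <;> cases ofLex z m <;> simp
  order x y z hxy hyz h := by
    obtain ⟨k, hk, h1⟩ := firstDiff_of_lt hxy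
    obtain ⟨m, hm, h2⟩ := firstDiff_of_lt hyz
    rw [hk, hm, WithTop.coe_inj] at h
    subst h
    revert h1 h2
    cases ofLex x k <;> cases ofLex y k <;> cases ofLex z k <;> simp

end lex

/-! ### The stepped-up colouring -/

theorem notArrowsC_of_type {κ : Cardinal.{u}} {r : ℕ} {τ : Ordinal.{u}}
    {lam : Ordinal.{u} → Cardinal.{u}} {S : Type u} (hS : Cardinal.mk S = κ)
    (g : Finset S → Ordinal.{u}) (hg : ∀ Y, g Y < τ)
    (hno : ∀ ξ < τ, ∀ X : Set S, Cardinal.mk X = lam ξ →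
      ¬ ∀ Y : Finset S, ↑Y ⊆ X → Y.card = r → g Y = ξ) : NotArrowsC κ r τ lam := by
  obtain ⟨φ⟩ : Nonempty (Quotient.out κ ≃ S) := Cardinal.eq.1 (by rw [Cardinal.mk_out, hS])
  refine ⟨fun Y => g (Y.map φ.toEmbedding), fun Y => hg _, ?_⟩
  rintro ⟨ξ, hξ, X, hX, hmono⟩
  refine hno ξ hξ (φ '' X) (by rw [Cardinal.mk_image_eq φ.injective, hX]) fun Y hY hc => ?_
  have := hmono (Y.map φ.symm.toEmbedding) ?_ (by simpa using hc)
  · simpa [Finset.map_map] using this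
  · intro x hx
    simp only [Finset.coe_map, Equiv.coe_toEmbedding, Set.mem_image] at hx
    obtain ⟨y, hy, rfl⟩ := hx
    obtain ⟨x, hx, rfl⟩ := hY hy
    simpa using hx

section colour
variable {S K : Type u} [LinearOrder S] [LinearOrder K] [Nonempty K]

open Classical in
/-- The stepped-up colouring: sets without valleys get the `f`-colour of their set of levels, the
others are coloured by the position of the first valley. The new colours are `τ` and, for `r ≠ 3`,
`τ + 1`; the old colour `0` is reused. -/
noncomputable def stepColour (t : TreeDist S K) (r : ℕ) (τ : Ordinal.{u})
    (f : Finset K → Ordinal.{u}) (Y : Finset S) : Ordinal.{u} :=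
  if t.HasValley Y then
    if t.pos Y = 2 then τ
    else if r ≠ 3 ∧ t.pos Y % 2 ≠ r % 2 then τ + 1
    else 0
  else f (t.levels Y)

variable {t : TreeDist S K} {r : ℕ} {τ : Ordinal.{u}} {f : Finset K → Ordinal.{u}}

theorem stepColour_lt (hτ : 0 < τ) (hf : ∀ T, f T < τ) (Y : Finset S) :
    stepColour t r τ f Y < τ + (eta r : Ordinal.{u}) := by
  have h0 : 0 < eta r := by unfold eta; split_ifs <;> norm_num
  have hle : τ ≤ τ + (eta r : Ordinal.{u}) := le_self_add
  unfold stepColour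
  split_ifs with h1 h2 h3
  · simpa using h0
  · have h1 : 1 < eta r := by unfold eta; rw [if_neg h3.1]; split_ifs <;> norm_num
    have : ((1 : ℕ) : Ordinal.{u}) < (eta r : Ordinal.{u}) := Nat.cast_lt.2 h1
    rw [Nat.cast_one] at this
    exact (add_lt_add_iff_left τ).2 this
  · exact hτ.trans_le hle
  · exact (hf _).trans_le hle

/-- An `(r + 2)`-set with a valley has a subset of size `r + 1` with a new colour, and is not
monochromatic. -/
theorem exists_stepColour_ne [DecidableEq S] (hr : 3 ≤ r) (hτ : 0 < τ) (hf : ∀ T, f T < τ)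
    {G : Finset S} (hG : G.card = r + 2) (hv : t.HasValley G) :
    ∃ w ∈ G, ∃ w' ∈ G, τ ≤ stepColour t r τ f (G.erase w) ∧
      stepColour t r τ f (G.erase w) ≠ stepColour t r τ f (G.erase w') := by
  have hlt : τ < τ + 1 := lt_add_one τ
  obtain ⟨w, hw, w', hw', hwv, ⟨h1, h2⟩ | ⟨h3, h4, h5, h6⟩⟩ := TreeDist.exists_erase_classes hr hG hv
  · have hc : stepColour t r τ f (G.erase w) = τ := by simp [stepColour, hwv, h1]
    refine ⟨w, hw, w', hw', hc.ge, ?_⟩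
    rw [hc]
    unfold stepColour
    split_ifs with h7 h8
    · exact absurd h8 (h2 h7)
    · exact hlt.ne
    · exact hτ.ne'
    · exact (hf _).ne'
  · have hc : stepColour t r τ f (G.erase w) = τ + 1 := by simp [stepColour, hwv, h3, h4, h5]
    refine ⟨w, hw, w', hw', hc.ge.trans' hlt.le, ?_⟩
    rw [hc]
    unfold stepColour
    split_ifs with h7 h8 h9
    · exact hlt.ne'
    · exact absurd (h6 h7) h9.2
    · exact (hτ.trans hlt).ne'
    · exact ((hf _).trans hlt).ne'

end colour

theorem stmt_13 (r : ℕ) (hr : 3 ≤ r) (κ : Cardinal.{u}) (hκ : 0 < κ)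
    (τ : Ordinal.{u}) (hτ : 0 < τ) (lam : Ordinal.{u} → Cardinal.{u})
    (hlam : ∀ ξ < τ, (r : Cardinal.{u}) + 1 ≤ lam ξ)
    (h : NotArrowsC κ r τ lam) :
    NotArrowsC (2 ^ κ) (r + 1) (τ + (eta r : Ordinal.{u}))
      (fun ξ => if ξ < τ then lam ξ + 1 else (r : Cardinal.{u}) + 2) := by
  classical
  obtain ⟨f, hf, hno⟩ := h
  have hne : Nonempty (Quotient.out κ) := by
    rw [← Cardinal.mk_ne_zero_iff, Cardinal.mk_out]
    exact hκ.ne'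
  obtain ⟨_, hwf⟩ := exists_wellFoundedLT (Quotient.out κ)
  set t := lexTree (Quotient.out κ)
  refine notArrowsC_of_type (S := Lex (Quotient.out κ → Bool)) ?_ (stepColour t r τ f)
    (stepColour_lt hτ hf) ?_
  · have : Cardinal.mk (Lex (Quotient.out κ → Bool)) = Cardinal.mk (Quotient.out κ → Bool) := rfl
    rw [this]
    simp
  intro ξ hξ X hX hmono
  have herase : ∀ G : Finset (Lex (Quotient.out κ → Bool)), ↑G ⊆ X → G.card = r + 2 →
      ∀ w ∈ G, stepColour t r τ f (G.erase w) = ξ := fun G hGX hG w hw =>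
    hmono _ ((Finset.coe_subset.2 (Finset.erase_subset w G)).trans hGX)
      (by rw [Finset.card_erase_of_mem hw, hG]; rfl)
  by_cases hξτ : ξ < τ
  · simp only [hξτ, if_true] at hX
    have hXcard : ((r + 2 : ℕ) : Cardinal.{u}) ≤ Cardinal.mk X := by
      rw [hX]
      have := hlam ξ hξτ
      calc ((r + 2 : ℕ) : Cardinal.{u}) = (r + 1) + 1 := by push_cast; rw [add_assoc]; norm_num
        _ ≤ lam ξ + 1 := by gcongr
    -- Four points witnessing a valley extend to `r + 2` points of `X`, one of whose subsets
    -- of size `r + 1` has a new colour.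
    have hcomb : ∀ Y : Finset (Lex (Quotient.out κ → Bool)), ↑Y ⊆ X → ¬ t.HasValley Y := by
      rintro Y hYX ⟨z, hz, a, ha, y, hy, b, hb, hlt⟩
      obtain ⟨Y', hY', hYG'⟩ : ∃ Y' : Finset (Lex (Quotient.out κ → Bool)),
          ↑Y' ⊆ X ∧ Y'.card ≤ r + 2 ∧ t.HasValley Y' := by
        refine ⟨{a, y, z, b}, ?_, Finset.card_le_four.trans (by omega), z, by simp, a, by simp,
          y, by simp, b, by simp, hlt⟩
        intro x hx
        simp only [Finset.coe_insert, Finset.coe_singleton, Set.mem_insert_iff,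
          Set.mem_singleton_iff] at hx
        rcases hx with rfl | rfl | rfl | rfl <;> exact hYX (by assumption)
      obtain ⟨G, hYG, hGX, hG⟩ : ∃ G : Finset (Lex (Quotient.out κ → Bool)),
          Y' ⊆ G ∧ ↑G ⊆ X ∧ G.card = r + 2 := by
        obtain ⟨s, hs⟩ := Cardinal.exists_finset_le_card X (r + 2) hXcard
        obtain ⟨G, hYG, hG', hG⟩ := Finset.exists_subsuperset_card_eq
          (Finset.subset_union_left (s₁ := Y') (s₂ := s.map (Function.Embedding.subtype _)))
          hYG'.1 (hs.trans (by
            rw [← Finset.card_map (Function.Embedding.subtype _)]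
            exact Finset.card_le_card Finset.subset_union_right))
        refine ⟨G, hYG, fun x hx => ?_, hG⟩
        rcases Finset.mem_union.1 (hG' hx) with hx' | hx'
        · exact hY' hx'
        · obtain ⟨x', -, rfl⟩ := Finset.mem_map.1 hx'
          exact x'.2
      obtain ⟨w, hw, w', hw', h1, -⟩ := exists_stepColour_ne hr hτ hf hG (hYG'.2.mono hYG)
      rw [herase G hGX hG w hw] at h1
      exact absurd hξτ h1.not_gt
    have hle := TreeDist.mk_le_levelSet hcomb
    rw [hX] at hle
    obtain ⟨D, hDX, hD⟩ := Cardinal.le_mk_iff_exists_subset.1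
      (Cardinal.add_one_le_add_one_iff.1 hle)
    refine hno ⟨ξ, hξτ, D, hD, fun T hT hTc => ?_⟩
    obtain ⟨Y, hYX, hYc, hYT⟩ := TreeDist.exists_finset_levels hcomb T
      (Finset.card_pos.1 (by omega)) (hT.trans hDX)
    have := hmono Y hYX (by rw [hYc, hTc])
    rwa [stepColour, if_neg (hcomb Y hYX), hYT] at this
  · simp only [hξτ, if_false] at hX
    have hX' : Cardinal.mk X = ((r + 2 : ℕ) : Cardinal.{u}) := by rw [hX]; push_cast; rfl
    obtain ⟨G, rfl, hG⟩ := Cardinal.mk_set_eq_nat_iff_finset.1 hX'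
    by_cases hv : t.HasValley G
    · obtain ⟨w, hw, w', hw', -, h2⟩ := exists_stepColour_ne hr hτ hf hG hv
      exact h2 ((herase G le_rfl hG w hw).trans (herase G le_rfl hG w' hw').symm)
    · obtain ⟨w, hw⟩ := Finset.card_pos.1 (show 0 < G.card by omega)
      have h1 := herase G le_rfl hG w hw
      rw [stepColour, if_neg fun h => hv (h.mono (Finset.erase_subset _ _))] at h1
      exact hξτ (h1 ▸ hf _)
end

section
/- For all positive integers n and r: (a) every hypergraph H = (V, E) with chromatic number χ(H) = n satisfies k(H; r) ≤ k(K_{rn}^{(r+1)}; r) + 5; and (b) the complete (r+1)-uniform hypergraph K_{rn}^{(r+1)} has chromatic number exactly n. Consequently k(K_{rn}^{(r+1)}; r) ≤ k(n, r) ≤ k(K_{rn}^{(r+1)}; r) + 5, where k(n, r) denotes the maximum of k(H; r) over all hypergraphs H with χ(H) = n. -/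
/-- A colouring `c` of the `r`-element subsets of the vertices of the hypergraph with
edge set `E` leaves no hyperedge of size `≥ r + 1` monochromatic. -/
def GoodColouring {V : Type*} (E : Set (Finset V)) (r k : ℕ)
    (c : Finset V → Fin k) : Prop :=
  ∀ e ∈ E, r + 1 ≤ e.card → ¬ ∃ i : Fin k, ∀ Y ⊆ e, Y.card = r → c Y = i

/-- `k(H; r)`: the least number `k` of colours for which some colouring of the
`r`-element subsets of the vertices leaves no hyperedge of size `≥ r + 1`
monochromatic. -/
noncomputable def kNum {V : Type*} (E : Set (Finset V)) (r : ℕ) : ℕ :=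
  sInf {k | ∃ c : Finset V → Fin k, GoodColouring E r k c}

/-- The chromatic number of the hypergraph with edge set `E`: the least number of
colours in a vertex colouring in which no hyperedge of size `≥ 2` is monochromatic. -/
noncomputable def chromNum {V : Type*} (E : Set (Finset V)) : ℕ :=
  sInf {k | ∃ c : V → Fin k, ∀ e ∈ E, 2 ≤ e.card → ¬ ∃ i : Fin k, ∀ v ∈ e, c v = i}

/-- The edge set of the complete `r'`-uniform hypergraph `K_m^{(r')}` on `m` vertices. -/
def completeEdges (m r' : ℕ) : Set (Finset (Fin m)) := {e | e.card = r'}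

/-- `k(n, r)`: the maximum of `k(H; r)` over all hypergraphs `H` with `χ(H) = n`. -/
noncomputable def kMax (n r : ℕ) : ℕ :=
  sSup {m | ∃ (V : Type) (E : Set (Finset V)), chromNum E = n ∧ kNum E r = m}

open Classical in
/-- The colouring of the finite subsets of `V` derived from a vertex colouring `χ` and a
colouring `c` of finite sets of vertex colours. The four new colours record the parity of the
number of classes met and the parity of the number of vertices in the least class met. -/
noncomputable def liftCol {V α β : Type*} [LinearOrder β] (χ : V → β) (c : Finset β → α)
    (Y : Finset V) : α ⊕ (Fin 2 × Fin 2) :=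
  if Set.InjOn χ (Y : Set V) then Sum.inl (c (Y.image χ))
  else Sum.inr (Fin.ofNat 2 (Y.image χ).card,
    Fin.ofNat 2 (Y.filter (fun v => ∀ w ∈ Y, χ v ≤ χ w)).card)

theorem ofNat_two_succ_ne (a : ℕ) : Fin.ofNat 2 (a + 1) ≠ Fin.ofNat 2 a := by
  intro h
  have := congrArg Fin.val h
  simp only [Fin.ofNat] at this
  omega

open Classical in
theorem exists_erase_ne {V α β : Type*} [LinearOrder β] (χ : V → β) (c : Finset β → α)
    (e : Finset V)
    (hc : Set.InjOn χ (e : Set V) → ∃ i ∈ e, ∃ j ∈ e,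
      c ((e.erase i).image χ) ≠ c ((e.erase j).image χ))
    (h2 : ∃ u ∈ e, ∃ v ∈ e, χ u ≠ χ v) :
    ∃ x ∈ e, ∃ y ∈ e, liftCol χ c (e.erase x) ≠ liftCol χ c (e.erase y) := by
  have notInj : ∀ z a b, a ∈ e → b ∈ e → a ≠ z → b ≠ z → a ≠ b → χ a = χ b →
      ¬ Set.InjOn χ ((e.erase z : Finset V) : Set V) := by
    intro z a b ha hb haz hbz hab h hi
    exact hab (hi (by simp [ha, haz]) (by simp [hb, hbz]) h)
  by_cases hinj : Set.InjOn χ (e : Set V)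
  · obtain ⟨i, hi, j, hj, hij⟩ := hc hinj
    refine ⟨i, hi, j, hj, ?_⟩
    have h1 : ∀ z, Set.InjOn χ ((e.erase z : Finset V) : Set V) := fun z =>
      hinj.mono (by exact_mod_cast Finset.erase_subset z e)
    unfold liftCol
    rw [if_pos (h1 i), if_pos (h1 j)]
    exact fun h => hij (Sum.inl.inj h)
  by_cases hz : ∃ z ∈ e, ∀ w ∈ e, χ w = χ z → w = z
  · obtain ⟨z, hze, hz⟩ := hz
    obtain ⟨x, hx, y, hy, hxy, hne⟩ : ∃ x ∈ e, ∃ y ∈ e, χ x = χ y ∧ x ≠ y := by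
      simpa [Set.InjOn] using hinj
    have hxz : x ≠ z := by
      rintro rfl; exact hne (hz y hy hxy.symm).symm
    have hyz : y ≠ z := by
      rintro rfl; exact hne (hz x hx hxy)
    refine ⟨x, hx, z, hze, ?_⟩
    have himx : (e.erase x).image χ = e.image χ := by
      ext b
      simp only [Finset.mem_image, Finset.mem_erase]
      constructor
      · rintro ⟨a, ⟨_, ha⟩, rfl⟩; exact ⟨a, ha, rfl⟩
      · rintro ⟨a, ha, rfl⟩
        by_cases hax : a = x
        · subst hax; exact ⟨y, ⟨hne.symm, hy⟩, hxy.symm⟩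
        · exact ⟨a, ⟨hax, ha⟩, rfl⟩
    have himz : (e.erase z).image χ = (e.image χ).erase (χ z) := by
      ext b
      simp only [Finset.mem_image, Finset.mem_erase]
      constructor
      · rintro ⟨a, ⟨haz, ha⟩, rfl⟩; exact ⟨fun h => haz (hz a ha h), a, ha, rfl⟩
      · rintro ⟨hb, a, ha, rfl⟩
        exact ⟨a, ⟨fun h => hb (by rw [h]), ha⟩, rfl⟩
    have hcard : (e.image χ).card = ((e.image χ).erase (χ z)).card + 1 :=
      (Finset.card_erase_add_one (Finset.mem_image_of_mem χ hze)).symm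
    unfold liftCol
    rw [if_neg (notInj z x y hx hy hxz hyz hne hxy)]
    split_ifs with hi
    · simp
    · intro h
      have hpar := congrArg Prod.fst (Sum.inr.inj h)
      simp only at hpar
      rw [himx, himz, hcard] at hpar
      exact ofNat_two_succ_ne _ hpar
  · push Not at hz
    obtain ⟨u₀, hu₀, v₀, hv₀, huv₀⟩ := h2
    obtain ⟨u, hu, hmin⟩ := Finset.exists_min_image e χ ⟨u₀, hu₀⟩
    obtain ⟨v, hv, huv⟩ : ∃ v ∈ e, χ v ≠ χ u := by
      by_contra! h
      exact huv₀ ((h u₀ hu₀).trans (h v₀ hv₀).symm)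
    obtain ⟨u', hu', huu, hune⟩ := hz u hu
    obtain ⟨v', hv', hvv, hvne⟩ := hz v hv
    refine ⟨v, hv, u, hu, ?_⟩
    have hvu : v ≠ u := fun h => huv (by rw [h])
    have hv'u : v' ≠ u := fun h => huv (by rw [← hvv, h])
    have hu'v : u' ≠ v := fun h => huv (by rw [← h, huu])
    have hfil : ∀ z t, t ∈ e → t ≠ z → χ t = χ u →
        (e.erase z).filter (fun a => ∀ w ∈ e.erase z, χ a ≤ χ w)
          = (e.filter (fun a => χ a = χ u)).erase z := by
      intro z t ht htz htu
      ext a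
      simp only [Finset.mem_filter, Finset.mem_erase]
      constructor
      · rintro ⟨⟨haz, ha⟩, h⟩
        exact ⟨haz, ha, le_antisymm (htu ▸ h t ⟨htz, ht⟩) (hmin a ha)⟩
      · rintro ⟨haz, ha, h⟩
        exact ⟨⟨haz, ha⟩, fun w hw => h ▸ hmin w hw.2⟩
    have hcard : (e.filter (fun a => χ a = χ u)).card
        = ((e.filter (fun a => χ a = χ u)).erase u).card + 1 :=
      (Finset.card_erase_add_one (by simp [hu])).symm
    unfold liftCol
    rw [if_neg (notInj v u u' hu hu' hvu.symm hu'v hune.symm huu.symm),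
      if_neg (notInj u v v' hv hv' hvu hv'u hvne.symm hvv.symm)]
    intro h
    have hpar := congrArg Prod.snd (Sum.inr.inj h)
    simp only at hpar
    rw [hfil v u hu hvu.symm rfl, hfil u u' hu' hune huu,
      Finset.erase_eq_of_notMem (by simp [huv]), hcard] at hpar
    exact ofNat_two_succ_ne _ hpar

/-- Colours may be taken from any finite type, not only from `Fin k`. -/
theorem exists_goodColouring {V α : Type*} [Fintype α] (E : Set (Finset V)) (r k : ℕ)
    (hk : Fintype.card α ≤ k) (c : Finset V → α)
    (h : ∀ e ∈ E, r + 1 ≤ e.card → ∃ Y ⊆ e, Y.card = r ∧ ∃ Z ⊆ e, Z.card = r ∧ c Y ≠ c Z) :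
    ∃ c : Finset V → Fin k, GoodColouring E r k c := by
  obtain ⟨φ⟩ : Nonempty (α ↪ Fin k) := Function.Embedding.nonempty_of_card_le (by simpa using hk)
  refine ⟨fun Y => φ (c Y), ?_⟩
  rintro e he hcard ⟨i, hi⟩
  obtain ⟨Y, hY, hYr, Z, hZ, hZr, hne⟩ := h e he hcard
  exact hne (φ.injective ((hi Y hY hYr).trans (hi Z hZ hZr).symm))

/-- The set defining `k(K_m^{(r+1)}; r)` is nonempty, so the infimum is attained. -/
theorem exists_good_complete (m r : ℕ) (hr : 1 ≤ r) :
    ∃ c : Finset (Fin m) → Fin (kNum (completeEdges m (r + 1)) r),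
      GoodColouring (completeEdges m (r + 1)) r (kNum (completeEdges m (r + 1)) r) c := by
  apply Nat.sInf_mem
    (s := {k | ∃ c : Finset (Fin m) → Fin k, GoodColouring (completeEdges m (r + 1)) r k c})
  refine ⟨_, exists_goodColouring _ r _ le_rfl (fun Y : Finset (Fin m) => Y) ?_⟩
  intro e he _
  have hcard : e.card = r + 1 := he
  obtain ⟨x, hx, y, hy, hxy⟩ := Finset.one_lt_card.mp (by omega : 1 < e.card)
  refine ⟨e.erase x, Finset.erase_subset _ _, by rw [Finset.card_erase_of_mem hx]; omega,
    e.erase y, Finset.erase_subset _ _, by rw [Finset.card_erase_of_mem hy]; omega, ?_⟩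
  intro h
  have : y ∈ e.erase x := by simp [hy, hxy.symm]
  rw [h] at this
  simp at this

open Classical in
theorem kNum_le_complete (n r : ℕ) (hn : 1 ≤ n) (hr : 1 ≤ r) (V : Type*) (E : Set (Finset V))
    (hE : chromNum E = n) :
    kNum E r ≤ kNum (completeEdges (r * n) (r + 1)) r + 5 := by
  -- As `n ≠ 0`, the infimum defining the chromatic number is attained.
  obtain ⟨χ₀, hχ₀⟩ : ∃ c : V → Fin n, ∀ e ∈ E, 2 ≤ e.card → ¬ ∃ i : Fin n, ∀ v ∈ e, c v = i := by
    have := Nat.sInf_mem (Nat.nonempty_of_pos_sInf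
      (s := {k | ∃ c : V → Fin k, ∀ e ∈ E, 2 ≤ e.card → ¬ ∃ i : Fin k, ∀ v ∈ e, c v = i})
      (by change 0 < chromNum E; omega))
    change chromNum E ∈ _ at this
    rw [hE] at this
    exact this
  obtain ⟨c, hc⟩ := exists_good_complete (r * n) r hr
  have hle : n ≤ r * n := Nat.le_mul_of_pos_left n hr
  let χ : V → Fin (r * n) := fun v => Fin.castLE hle (χ₀ v)
  refine Nat.sInf_le (exists_goodColouring E r _ ?_ (liftCol χ c) ?_)
  · simp
  intro e he hcard
  obtain ⟨u, hu, v, hv, huv⟩ : ∃ u ∈ e, ∃ v ∈ e, χ u ≠ χ v := by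
    by_contra! h
    obtain ⟨w, hw⟩ := Finset.card_pos.mp (by omega : 0 < e.card)
    exact hχ₀ e he (by omega)
      ⟨χ₀ w, fun v hv => Fin.castLE_injective hle (h v hv w hw)⟩
  have hne : u ≠ v := fun h => huv (by rw [h])
  obtain ⟨e', h1, h2, h3⟩ := Finset.exists_subsuperset_card_eq (s := {u, v}) (t := e) (n := r + 1)
    (by intro x; simp; rintro (rfl | rfl) <;> assumption)
    (by rw [Finset.card_pair hne]; omega) hcard
  have hu' : u ∈ e' := h1 (by simp)
  have hv' : v ∈ e' := h1 (by simp)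
  obtain ⟨x, hx, y, hy, hxy⟩ := exists_erase_ne χ c e' (by
    intro hinj
    by_contra! h
    have hic : (e'.image χ).card = r + 1 := by rw [Finset.card_image_of_injOn hinj, h3]
    refine hc (e'.image χ) hic (by omega) ⟨c ((e'.erase u).image χ), ?_⟩
    intro Y hY hYr
    -- `Y` is the image under `χ` of a set obtained by deleting one vertex.
    obtain ⟨b, hb, rfl⟩ : ∃ b ∈ e'.image χ, (e'.image χ).erase b = Y := by
      obtain ⟨b, hbY, hb⟩ := Finset.exists_eq_insert_iff.mpr ⟨hY, by omega⟩
      refine ⟨b, by rw [← hb]; simp, by rw [← hb, Finset.erase_insert hbY]⟩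
    obtain ⟨a, ha, rfl⟩ := Finset.mem_image.mp hb
    rw [← h a ha u hu']
    congr 1
    ext t
    simp only [Finset.mem_image, Finset.mem_erase]
    constructor
    · rintro ⟨ht, w, hw, rfl⟩
      exact ⟨w, ⟨fun h => ht (by rw [h]), hw⟩, rfl⟩
    · rintro ⟨w, ⟨hwa, hw⟩, rfl⟩
      exact ⟨fun h => hwa (hinj hw ha h), w, hw, rfl⟩) ⟨u, hu', v, hv', huv⟩
  exact ⟨e'.erase x, (Finset.erase_subset _ _).trans h2,
    by rw [Finset.card_erase_of_mem hx]; omega,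
    e'.erase y, (Finset.erase_subset _ _).trans h2,
    by rw [Finset.card_erase_of_mem hy]; omega, hxy⟩

theorem chromNum_complete (n r : ℕ) (hr : 1 ≤ r) :
    chromNum (completeEdges (r * n) (r + 1)) = n := by
  have hmem : n ∈ {k | ∃ c : Fin (r * n) → Fin k, ∀ e ∈ completeEdges (r * n) (r + 1),
      2 ≤ e.card → ¬ ∃ i : Fin k, ∀ v ∈ e, c v = i} := by
    -- Split `[rn] ≃ [r] × [n]` into `n` classes of `r` vertices each.
    refine ⟨fun v => (finProdFinEquiv.symm v).2, ?_⟩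
    rintro e he - ⟨i, hi⟩
    have hcard : e.card = r + 1 := he
    have := Finset.card_le_card_of_injOn (s := e) (t := (Finset.univ : Finset (Fin r)))
      (fun v => (finProdFinEquiv.symm v).1) (by simp) (by
        intro a ha b hb h
        exact finProdFinEquiv.symm.injective (Prod.ext h ((hi a ha).trans (hi b hb).symm)))
    simp at this
    omega
  apply le_antisymm (Nat.sInf_le hmem)
  refine le_csInf ⟨n, hmem⟩ ?_
  rintro k ⟨c, hc⟩
  by_contra! hlt
  obtain ⟨i, -, hi⟩ := Finset.exists_lt_card_fiber_of_mul_lt_card_of_maps_to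
    (s := (Finset.univ : Finset (Fin (r * n)))) (t := (Finset.univ : Finset (Fin k))) (f := c)
    (n := r) (by simp) (by
      simp only [Finset.card_univ, Fintype.card_fin]
      rw [mul_comm]
      exact Nat.mul_lt_mul_of_pos_left hlt hr)
  obtain ⟨e, he, hcard⟩ := Finset.exists_subset_card_eq (Nat.succ_le_of_lt hi)
  exact hc e hcard (by omega) ⟨i, fun v hv => (Finset.mem_filter.mp (he hv)).2⟩

theorem stmt_15 (n r : ℕ) (hn : 1 ≤ n) (hr : 1 ≤ r) :
    (∀ (V : Type) (E : Set (Finset V)), chromNum E = n →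
        kNum E r ≤ kNum (completeEdges (r * n) (r + 1)) r + 5) ∧
    chromNum (completeEdges (r * n) (r + 1)) = n ∧
    kNum (completeEdges (r * n) (r + 1)) r ≤ kMax n r ∧
    kMax n r ≤ kNum (completeEdges (r * n) (r + 1)) r + 5 := by
  have ha : ∀ (V : Type) (E : Set (Finset V)), chromNum E = n →
      kNum E r ≤ kNum (completeEdges (r * n) (r + 1)) r + 5 :=
    fun V E hE => kNum_le_complete n r hn hr V E hE
  have hb := chromNum_complete n r hr
  refine ⟨ha, hb, ?_, ?_⟩
  · refine le_csSup ⟨kNum (completeEdges (r * n) (r + 1)) r + 5, ?_⟩ ⟨_, _, hb, rfl⟩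
    rintro m ⟨V, E, hE, rfl⟩
    exact ha V E hE
  · refine csSup_le ⟨_, _, _, hb, rfl⟩ ?_
    rintro m ⟨V, E, hE, rfl⟩
    exact ha V E hE
end

section
/- Let r, k ≥ 2 be integers and let n be an integer such that n ↛ (r+1)_k^r. Suppose the hypergraph H = (V, E) admits a vertex colouring C₁ : V → {0, …, n−1} under which no hyperedge of size ≥ r + 1 is monochromatic. Then there exists a colouring of the r-element subsets of V with k + f(r) colours under which no hyperedge of size ≥ r + 1 is monochromatic (i.e., no e ∈ E with |e| ≥ r + 1 has all of its r-element subsets of a single colour), where f(2) = 1, f(3) = 3, f(r) = 4 if r ≥ 4 and r + 1 is prime, and f(r) = 5 otherwise. -/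
/-- The number `f(r)` of additional colours in Theorem 4.4 (`thm:subsets`). -/
def fcol (r : ℕ) : ℕ :=
  if r = 2 then 1 else if r = 3 then 3 else if Nat.Prime (r + 1) then 4 else 5

namespace SubsetColouring

/-- A numbering by `0, 1, 2, 3` of the parities of `t` and `m`, with `3` reserved for the case
(`t` odd, `m` even) that does not occur for non-rainbow triples. -/
def code (t m : ℕ) : ℕ :=
  if t % 2 = 1 then (if m % 2 = 1 then 0 else 3) else 1 + m % 2

variable {V : Type*} {n : ℕ}

/-- The vertices of `Y` whose colour is least among the colours on `Y`. -/
def minClass (C : V → Fin n) (Y : Finset V) : Finset V :=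
  Y.filter (fun v => ∀ w ∈ Y, C v ≤ C w)

open Classical in
/-- The colouring of the `r`-sets: the old colour, below `k`, on rainbow sets, and otherwise
a new colour `k + code t m`. The truncation `min` matters only for `r = 2`. -/
noncomputable def col (r k : ℕ) (f : Finset ℕ → Fin k) (C : V → Fin n) (Y : Finset V) : ℕ :=
  if Set.InjOn C Y then (f (Y.image (fun v => (C v : ℕ))) : ℕ)
  else k + min (code (Y.image C).card (minClass C Y).card) (fcol r - 1)

lemma fcol_pos (r : ℕ) : 0 < fcol r := by
  unfold fcol; split_ifs <;> omega

lemma col_lt (r k : ℕ) (f : Finset ℕ → Fin k) (C : V → Fin n) (Y : Finset V) :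
    col r k f C Y < k + fcol r := by
  have := fcol_pos r
  unfold col
  split_ifs
  · have := (f (Y.image (fun v => (C v : ℕ)))).2
    omega
  · omega

lemma card_image_lt_of_not_injOn (C : V → Fin n) {Y : Finset V} (hY : ¬ Set.InjOn C Y) :
    (Y.image C).card < Y.card :=
  lt_of_le_of_ne Finset.card_image_le (fun h => hY (Finset.card_image_iff.mp h))

/-- For `r ≥ 3` the number of new colours suffices for every code that occurs. -/
lemma code_lt (C : V → Fin n) {Y : Finset V} (hY : ¬ Set.InjOn C Y) (hr : 3 ≤ Y.card) :
    code (Y.image C).card (minClass C Y).card < fcol Y.card := by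
  by_cases h3 : Y.card = 3
  · have hlt := card_image_lt_of_not_injOn C hY
    have hf : fcol Y.card = 3 := by rw [h3]; rfl
    rw [hf]
    unfold code
    split_ifs with h1 h2
    · omega
    · exfalso
      have ht : (Y.image C).card = 1 := by omega
      obtain ⟨x, hx⟩ := Finset.card_eq_one.mp ht
      have hall : ∀ v ∈ Y, C v = x := fun v hv => by
        have := Finset.mem_image_of_mem C hv
        rwa [hx, Finset.mem_singleton] at this
      have : minClass C Y = Y :=
        Finset.filter_true_of_mem fun v hv w hw => by rw [hall v hv, hall w hw]
      rw [this] at h2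
      omega
    · omega
  · have : 4 ≤ fcol Y.card := by
      unfold fcol; split_ifs <;> omega
    refine lt_of_lt_of_le ?_ this
    unfold code
    split_ifs <;> omega

lemma three_le_card (C : V → Fin n) {Y : Finset V} (hY : ¬ Set.InjOn C Y) {p q : V}
    (hp : p ∈ Y) (hq : q ∈ Y) (hpq : C p ≠ C q) : 3 ≤ Y.card := by
  have hlt := card_image_lt_of_not_injOn C hY
  have : 1 < (Y.image C).card :=
    Finset.one_lt_card.mpr
      ⟨C p, Finset.mem_image_of_mem C hp, C q, Finset.mem_image_of_mem C hq, hpq⟩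
  omega

/-- Non-rainbow sets of size `r ≥ 3` with the same colour have the same code. -/
lemma code_eq {r k : ℕ} {f : Finset ℕ → Fin k} {C : V → Fin n} {Y Z : Finset V} (hr : 3 ≤ r)
    (hY : ¬ Set.InjOn C Y) (hZ : ¬ Set.InjOn C Z) (hYr : Y.card = r) (hZr : Z.card = r)
    (h : col r k f C Y = col r k f C Z) :
    code (Y.image C).card (minClass C Y).card = code (Z.image C).card (minClass C Z).card := by
  have h1 := code_lt C hY (by omega)
  have h2 := code_lt C hZ (by omega)
  rw [hYr] at h1
  rw [hZr] at h2
  unfold col at h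
  rw [if_neg hY, if_neg hZ] at h
  omega

lemma image_erase_of_twin [DecidableEq V] (C : V → Fin n) {X : Finset V} {a b : V}
    (hb : b ∈ X) (hab : a ≠ b) (hC : C a = C b) : (X.erase a).image C = X.image C := by
  refine Finset.Subset.antisymm (Finset.image_subset_image (Finset.erase_subset _ _)) ?_
  intro y hy
  obtain ⟨v, hv, rfl⟩ := Finset.mem_image.mp hy
  by_cases hva : v = a
  · rw [hva, hC]
    exact Finset.mem_image_of_mem C (Finset.mem_erase.mpr ⟨hab.symm, hb⟩)
  · exact Finset.mem_image_of_mem C (Finset.mem_erase.mpr ⟨hva, hv⟩)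

lemma not_injOn {C : V → Fin n} {Y : Finset V} {a b : V} (ha : a ∈ Y) (hb : b ∈ Y)
    (hab : a ≠ b) (hC : C a = C b) : ¬ Set.InjOn C Y :=
  fun h => hab (h ha hb hC)

/-- A set of `r + 1` vertices that is neither rainbow nor constant is not monochromatic. -/
lemma not_mono [DecidableEq V] {r k : ℕ} (f : Finset ℕ → Fin k) (C : V → Fin n) {X : Finset V}
    (hX : X.card = r + 1) {a b d : V} (ha : a ∈ X) (hb : b ∈ X) (hd : d ∈ X) (hab : a ≠ b)
    (hC : C a = C b) (hda : C d ≠ C a) (i : ℕ) :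
    ¬ ∀ Y ⊆ X, Y.card = r → col r k f C Y = i := by
  intro hmono
  have hcard : ∀ v ∈ X, (X.erase v).card = r := fun v hv => by
    rw [Finset.card_erase_of_mem hv, hX]; rfl
  have heq : ∀ v ∈ X, ∀ w ∈ X, col r k f C (X.erase v) = col r k f C (X.erase w) :=
    fun v hv w hw => by
      rw [hmono _ (Finset.erase_subset _ _) (hcard v hv),
        hmono _ (Finset.erase_subset _ _) (hcard w hw)]
  by_cases huniq : ∃ v ∈ X, ∀ w ∈ X, C w = C v → w = v
  · obtain ⟨v, hv, hvu⟩ := huniq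
    have hav : a ≠ v := fun h => hab (h.trans (hvu b hb (by rw [← hC, h])).symm)
    have hbv : b ≠ v := fun h => hab ((hvu a ha (by rw [hC, h])).trans h.symm)
    have hY1 : ¬ Set.InjOn C (X.erase v : Finset V) :=
      not_injOn (Finset.mem_erase.mpr ⟨hav, ha⟩) (Finset.mem_erase.mpr ⟨hbv, hb⟩) hab hC
    have h12 := heq v hv a ha
    by_cases hY2 : Set.InjOn C (X.erase a : Finset V)
    · unfold col at h12
      rw [if_neg hY1, if_pos hY2] at h12
      have := (f ((X.erase a).image (fun v => (C v : ℕ)))).2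
      omega
    · have hdna : d ≠ a := fun h => hda (by rw [h])
      have h3 : 3 ≤ r := by
        rw [← hcard a ha]
        exact three_le_card C hY2 (Finset.mem_erase.mpr ⟨hdna, hd⟩)
          (Finset.mem_erase.mpr ⟨hab.symm, hb⟩) (by rwa [← hC])
      have hcode := code_eq h3 hY1 hY2 (hcard v hv) (hcard a ha) h12
      have ht2 := image_erase_of_twin C hb hab hC
      have ht1 : ((X.erase v).image C).card + 1 = (X.image C).card := by
        have hnot : C v ∉ (X.erase v).image C := by
          intro hm
          obtain ⟨w, hw, hwv⟩ := Finset.mem_image.mp hm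
          exact (Finset.mem_erase.mp hw).1 (hvu w (Finset.mem_erase.mp hw).2 hwv)
        rw [← Finset.card_insert_of_notMem hnot, ← Finset.image_insert, Finset.insert_erase hv]
      rw [ht2, ← ht1] at hcode
      unfold code at hcode
      split_ifs at hcode <;> omega
  · push Not at huniq
    obtain ⟨p, hp, hpmin⟩ := Finset.exists_min_image X C ⟨a, ha⟩
    obtain ⟨q, hq, hqp⟩ : ∃ q ∈ X, C q ≠ C p := by
      by_cases h : C a = C p
      · exact ⟨d, hd, by rwa [← h]⟩
      · exact ⟨a, ha, h⟩
    obtain ⟨p', hp', hpp', hp'ne⟩ := huniq p hp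
    obtain ⟨q', hq', hqq', hq'ne⟩ := huniq q hq
    have hne : ∀ {x y : V}, C x ≠ C y → x ≠ y := fun h e => h (by rw [e])
    have hq'p : C q' ≠ C p := by rwa [hqq']
    have hp'q : C p' ≠ C q := by rw [hpp']; exact hqp.symm
    have hY1 : ¬ Set.InjOn C (X.erase p : Finset V) :=
      not_injOn (Finset.mem_erase.mpr ⟨hne hqp, hq⟩) (Finset.mem_erase.mpr ⟨hne hq'p, hq'⟩)
        hq'ne.symm hqq'.symm
    have hpY2 : p ∈ X.erase q := Finset.mem_erase.mpr ⟨(hne hqp).symm, hp⟩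
    have hY2 : ¬ Set.InjOn C (X.erase q : Finset V) :=
      not_injOn hpY2 (Finset.mem_erase.mpr ⟨hne hp'q, hp'⟩) hp'ne.symm hpp'.symm
    have h3 : 3 ≤ r := by
      rw [← hcard q hq]
      exact three_le_card C hY2 hpY2 (Finset.mem_erase.mpr ⟨hq'ne, hq'⟩) hq'p.symm
    have hcode := code_eq h3 hY1 hY2 (hcard p hp) (hcard q hq) (heq p hp q hq)
    rw [image_erase_of_twin C hp' hp'ne.symm hpp'.symm,
      image_erase_of_twin C hq' hq'ne.symm hqq'.symm] at hcode
    -- Since `p` has a twin of its colour in `X`, the least colour survives both deletions.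
    have hm : ∀ Y ⊆ X, ∀ u ∈ Y, C u = C p → minClass C Y = Y.filter (fun v => C v = C p) := by
      intro Y hYX u hu hup
      refine Finset.filter_congr fun v hv => ⟨fun h => ?_, fun h w hw => ?_⟩
      · exact le_antisymm (hup ▸ h u hu) (hpmin v (hYX hv))
      · rw [h]; exact hpmin w (hYX hw)
    have hm1 : (minClass C (X.erase p)).card + 1 = (X.filter (fun v => C v = C p)).card := by
      rw [hm _ (Finset.erase_subset _ _) p' (Finset.mem_erase.mpr ⟨hp'ne, hp'⟩) hpp',
        Finset.filter_erase]
      exact Finset.card_erase_add_one (Finset.mem_filter.mpr ⟨hp, rfl⟩)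
    have hm2 : (minClass C (X.erase q)).card = (X.filter (fun v => C v = C p)).card := by
      rw [hm _ (Finset.erase_subset _ _) p hpY2 rfl, Finset.filter_erase,
        Finset.erase_eq_of_notMem (show q ∉ X.filter (fun v => C v = C p) from
          fun h => hqp (Finset.mem_filter.mp h).2)]
    rw [hm2, ← hm1] at hcode
    unfold code at hcode
    split_ifs at hcode <;> omega

/-- A rainbow set of `r + 1` vertices is not monochromatic, by the choice of `f`. -/
lemma not_mono_of_injOn {r k : ℕ} {f : Finset ℕ → Fin k}
    (hf : ∀ i : Fin k, ∀ X ⊆ Finset.range n, X.card = r + 1 →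
      ∃ Y ⊆ X, Y.card = r ∧ f Y ≠ i)
    (C : V → Fin n) {X : Finset V} (hX : X.card = r + 1) (hinj : Set.InjOn C X) (i : ℕ) :
    ¬ ∀ Y ⊆ X, Y.card = r → col r k f C Y = i := by
  classical
  intro hmono
  have hinj' : Set.InjOn (fun v => (C v : ℕ)) X :=
    fun x hx y hy hxy => hinj hx hy (Fin.ext hxy)
  have hcol : ∀ Y ⊆ X, Y.card = r → (f (Y.image (fun v => (C v : ℕ))) : ℕ) = i := by
    intro Y hY hc
    have := hmono Y hY hc
    unfold col at this
    rwa [if_pos (hinj.mono (Finset.coe_subset.mpr hY))] at this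
  obtain ⟨Y₀, hY₀, hc₀⟩ := Finset.exists_subset_card_eq (show r ≤ X.card by omega)
  obtain ⟨Z, hZ, hZc, hZf⟩ := hf (f (Y₀.image (fun v => (C v : ℕ))))
    (X.image (fun v => (C v : ℕ)))
    (by
      intro y hy
      obtain ⟨v, -, rfl⟩ := Finset.mem_image.mp hy
      exact Finset.mem_range.mpr (C v).2)
    (by rw [Finset.card_image_of_injOn hinj', hX])
  obtain ⟨Y, hY, rfl⟩ := Finset.subset_image_iff.mp hZ
  rw [Finset.card_image_of_injOn (hinj'.mono hY)] at hZc
  exact hZf (Fin.ext ((hcol Y (Finset.coe_subset.mp hY) hZc).trans (hcol Y₀ hY₀ hc₀).symm))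

end SubsetColouring

open SubsetColouring in
theorem stmt_16 (r k n : ℕ) (hr : 2 ≤ r) (hk : 2 ≤ k)
    (h : ¬ Arrows n r k (r + 1))
    {V : Type*} (E : Set (Finset V)) (C₁ : V → Fin n)
    (hC₁ : ∀ e ∈ E, r + 1 ≤ e.card → ¬ ∃ i : Fin n, ∀ v ∈ e, C₁ v = i) :
    ∃ c : Finset V → Fin (k + fcol r), GoodColouring E r (k + fcol r) c := by
  classical
  unfold Arrows at h
  push Not at h
  obtain ⟨f, hf⟩ := h
  refine ⟨fun Y => ⟨col r k f C₁ Y, col_lt r k f C₁ Y⟩, ?_⟩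
  rintro e he hcard ⟨i, hi⟩
  have hmono : ∀ X ⊆ e, ∀ Y ⊆ X, Y.card = r → col r k f C₁ Y = i :=
    fun X hX Y hY hc => congrArg Fin.val (hi Y (hY.trans hX) hc)
  by_cases hinj : Set.InjOn C₁ e
  · obtain ⟨X, hX, hXc⟩ := Finset.exists_subset_card_eq hcard
    exact not_mono_of_injOn hf C₁ hXc (hinj.mono (Finset.coe_subset.mpr hX)) i (hmono X hX)
  · unfold Set.InjOn at hinj
    push Not at hinj
    obtain ⟨a, ha, b, hb, hC, hab⟩ := hinj
    have hnc := hC₁ e he hcard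
    push Not at hnc
    obtain ⟨d, hd, hda⟩ := hnc (C₁ a)
    have hsub : ({a, b, d} : Finset V) ⊆ e := by
      intro x hx
      simp only [Finset.mem_insert, Finset.mem_singleton] at hx
      rcases hx with rfl | rfl | rfl
      exacts [ha, hb, hd]
    obtain ⟨X, hX₁, hX₂, hXc⟩ := Finset.exists_subsuperset_card_eq hsub
      (Finset.card_le_three.trans (by omega : 3 ≤ r + 1)) hcard
    exact not_mono f C₁ hXc (hX₁ (by simp)) (hX₁ (by simp)) (hX₁ (by simp)) hab hC hda i
      (hmono X hX₂)
end
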